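/- arXiv:2411.14960 — 2 statements merged into one kernel-verified Lean document; each statement's English description precedes it below -/
import Mathlib

section
/- Let 𝐊 be an algebraic extension of 𝔽_p(t), let O_𝐊 be the integral closure of 𝔽_p[t] in 𝐊, and let 𝐤 be the constant field of 𝐊 (the algebraic closure of 𝔽_p in 𝐊). If 𝐤 is infinite and 𝐤 is first-order definable in the ring O_𝐊, then the polynomial ring 𝐤[t] is first-order definable in O_𝐊. -/
noncomputable section

/-- A normalized (surjective onto `ℤ`) discrete valuation on a field `K`, i.e. a
"prime" of a global function field. -/
structure FFPrime (K : Type) [Field K] where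
  ord : K → WithTop ℤ
  ord_zero : ord 0 = ⊤
  ord_ne_top : ∀ x : K, x ≠ 0 → ord x ≠ ⊤
  ord_one : ord 1 = 0
  ord_mul : ∀ x y : K, ord (x * y) = ord x + ord y
  ord_add : ∀ x y : K, min (ord x) (ord y) ≤ ord (x + y)
  ord_surj : ∀ n : ℤ, ∃ x : K, ord x = (n : WithTop ℤ)

namespace FFPrime

variable {K L : Type} [Field K] [Field L]

/-- `w` lies over `v` along `φ`, with ramification index `e`. -/
def LiesOverWith (w : FFPrime L) (v : FFPrime K) (φ : K →+* L) (e : ℕ) : Prop :=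
  0 < e ∧ ∀ x : K, w.ord (φ x) = ((e : ℤ) : WithTop ℤ) * v.ord x

/-- `w` lies over `v` along `φ`. -/
def LiesOver (w : FFPrime L) (v : FFPrime K) (φ : K →+* L) : Prop :=
  ∃ e : ℕ, w.LiesOverWith v φ e

open Classical in
/-- The ramification index `e(w/v)`. -/
noncomputable def ramIdx (w : FFPrime L) (v : FFPrime K) (φ : K →+* L) : ℕ :=
  if h : ∃ e : ℕ, w.LiesOverWith v φ e then h.choose else 0

/-- The residue field of `v` has exactly `n` elements. -/
def HasResidueCard (v : FFPrime K) (n : ℕ) : Prop :=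
  ∃ s : Finset K, s.card = n ∧ (∀ x ∈ s, 0 ≤ v.ord x) ∧
    (∀ x ∈ s, ∀ y ∈ s, x ≠ y → ¬ 0 < v.ord (x - y)) ∧
    (∀ z : K, 0 ≤ v.ord z → ∃ x ∈ s, 0 < v.ord (z - x))

open Classical in
/-- The residue (relative) degree `f(w/v)`: the unique `f ≥ 1` with
`#κ_w = (#κ_v) ^ f` (residue fields of global function fields are finite). -/
noncomputable def resDeg (w : FFPrime L) (v : FFPrime K) : ℕ :=
  if h : ∃ f : ℕ, 0 < f ∧ ∃ m n : ℕ, 1 < m ∧ v.HasResidueCard m ∧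
      w.HasResidueCard n ∧ n = m ^ f then h.choose else 0

/-- `v` splits completely in the extension given by `φ`: every prime above it has
ramification index and residue degree `1`. -/
def SplitsCompletely (v : FFPrime K) (φ : K →+* L) : Prop :=
  ∀ w : FFPrime L, w.LiesOver v φ → w.ramIdx v φ = 1 ∧ w.resDeg v = 1

/-- `v` is inert in the finite extension `M/K`: there is a unique prime above it, with
ramification index `1` and residue degree `[M : K]`. -/
def IsInert (v : FFPrime K) (M : Type) [Field M] [Algebra K M] : Prop :=
  (∃! w : FFPrime M, w.LiesOver v (algebraMap K M)) ∧
    ∀ w : FFPrime M, w.LiesOver v (algebraMap K M) →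
      w.ramIdx v (algebraMap K M) = 1 ∧ w.resDeg v = Module.finrank K M

/-- `v` ramifies in the extension given by `φ`: some prime above it has ramification
index `> 1`. -/
def Ramifies (v : FFPrime K) (φ : K →+* L) : Prop :=
  ∃ w : FFPrime L, w.LiesOver v φ ∧ 2 ≤ w.ramIdx v φ

/-- `ord_v z ≡ 0 mod q`. -/
def OrdDvd (v : FFPrime K) (q : ℕ) (z : K) : Prop :=
  ∃ n : ℤ, v.ord z = (((q : ℤ) * n : ℤ) : WithTop ℤ)

end FFPrime

/-- A nontrivial (rank one) valuation on a possibly infinite algebraic extension of a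
global function field, with values in `ℚ ∪ {∞}`. -/
structure FFVal (B : Type) [Field B] where
  ord : B → WithTop ℚ
  ord_zero : ord 0 = ⊤
  ord_ne_top : ∀ x : B, x ≠ 0 → ord x ≠ ⊤
  ord_one : ord 1 = 0
  ord_mul : ∀ x y : B, ord (x * y) = ord x + ord y
  ord_add : ∀ x y : B, min (ord x) (ord y) ≤ ord (x + y)
  nontrivial : ∃ x : B, ord x ≠ 0 ∧ ord x ≠ ⊤

/-- The valuation `V` of the big field restricts, up to a normalization factor `c`, to
the (normalized discrete) prime `v` of `K` along `φ`; i.e. `v` is the prime of `K`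
lying below `V`. -/
def FFVal.RestrictsTo {K B : Type} [Field K] [Field B] (V : FFVal B) (v : FFPrime K)
    (φ : K →+* B) : Prop :=
  ∃ c : ℚ, 0 < c ∧
    ∀ x : K, V.ord (φ x) = ((c : ℚ) : WithTop ℚ) * WithTop.map (fun n : ℤ => (n : ℚ)) (v.ord x)

/-- The algebraic extension `B` of the rational function field `F0 = 𝔽_p(t)` is
`q`-bounded: for every valuation of `B`, the `q`-adic valuations of the ramification
indices and residue degrees along every finite subextension are bounded. -/
def IsQBounded (q : ℕ) (F0 B : Type) [Field F0] [Field B] [Algebra F0 B] : Prop :=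
  ∀ V : FFVal B, ∃ C : ℕ,
    ∀ L : IntermediateField F0 B, FiniteDimensional F0 L →
      ∀ v0 : FFPrime F0, ∀ vL : FFPrime L,
        V.RestrictsTo v0 (algebraMap F0 B) →
        V.RestrictsTo vL L.val.toRingHom →
        padicValNat q (vL.ramIdx v0 (algebraMap F0 L)) ≤ C ∧
        padicValNat q (vL.resDeg v0) ≤ C

/-- The prime `v` of `K` has uniformly `q`-bounded ramification in `B`. -/
def UnifQBoundedRam (q : ℕ) {K : Type} [Field K] (B : Type) [Field B] [Algebra K B]
    (v : FFPrime K) : Prop :=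
  ∃ C : ℕ, ∀ F : IntermediateField K B, FiniteDimensional K F →
    ∀ w : FFPrime F, w.LiesOver v (algebraMap K F) →
      padicValNat q (w.ramIdx v (algebraMap K F)) ≤ C

/-- The prime `v` of `K` has uniformly absolutely bounded ramification in `B`. -/
def UnifAbsBoundedRam {K : Type} [Field K] (B : Type) [Field B] [Algebra K B]
    (v : FFPrime K) : Prop :=
  ∃ C : ℕ, ∀ F : IntermediateField K B, FiniteDimensional K F →
    ∀ w : FFPrime F, w.LiesOver v (algebraMap K F) →
      w.ramIdx v (algebraMap K F) ≤ C

/-- The prime `v` of `K` has uniformly `q`-bounded relative (residue) degree in `B`. -/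
def UnifQBoundedRes (q : ℕ) {K : Type} [Field K] (B : Type) [Field B] [Algebra K B]
    (v : FFPrime K) : Prop :=
  ∃ C : ℕ, ∀ F : IntermediateField K B, FiniteDimensional K F →
    ∀ w : FFPrime F, w.LiesOver v (algebraMap K F) →
      padicValNat q (w.resDeg v) ≤ C

/-- The prime `v` of `K` is uniformly `q`-bounded in `B`. -/
def UniformlyQBoundedAt (q : ℕ) {K : Type} [Field K] (B : Type) [Field B] [Algebra K B]
    (v : FFPrime K) : Prop :=
  UnifQBoundedRam q B v ∧ UnifQBoundedRes q B v

/-- The integral closure in `B` of the valuation ring `O_v = {x ∈ K : ord_v x ≥ 0}`. -/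
def valIntegralClosure {K : Type} [Field K] (v : FFPrime K) (B : Type) [Field B]
    [Algebra K B] : Set B :=
  {x : B | ∃ P : Polynomial K, P.Monic ∧ (∀ n : ℕ, 0 ≤ v.ord (P.coeff n)) ∧
    Polynomial.aeval x P = 0}

/-- The integral closure in `B` of the ring `O_{K,S}` of `S`-integers of `K`. -/
def sIntegralClosure {K : Type} [Field K] (S : Set (FFPrime K)) (B : Type) [Field B]
    [Algebra K B] : Set B :=
  {x : B | ∃ P : Polynomial K, P.Monic ∧
    (∀ n : ℕ, ∀ v : FFPrime K, v ∉ S → 0 ≤ v.ord (P.coeff n)) ∧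
    Polynomial.aeval x P = 0}

/-- Elements of `B` that are units at every prime of `B` lying over a prime of `S`. -/
def unitsAtS {K : Type} [Field K] (S : Set (FFPrime K)) (B : Type) [Field B]
    [Algebra K B] : Set B :=
  {x : B | ∀ V : FFVal B, (∃ v ∈ S, V.RestrictsTo v (algebraMap K B)) → V.ord x = 0}

/-- Elements `x` of `B` with `ord (x - 1) > 0` at every prime of `B` lying over a
prime of `S`. -/
def onesAtS {K : Type} [Field K] (S : Set (FFPrime K)) (B : Type) [Field B]
    [Algebra K B] : Set B :=
  {x : B | ∀ V : FFVal B, (∃ v ∈ S, V.RestrictsTo v (algebraMap K B)) → 0 < V.ord (x - 1)}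

/-- A subset of a commutative ring is first-order definable in the language of rings
`{0, 1, +, ·}` with parameters from the ring. -/
def FODefinable {R : Type} [CommRing R] (X : Set R) : Prop :=
  letI : FirstOrder.Ring.CompatibleRing R := FirstOrder.Ring.compatibleRingOfRing R
  Set.Definable₁ (Set.univ : Set R) FirstOrder.Language.ring X

/-- A subset of a commutative ring is existentially (diophantine) definable: it is cut
out by a block of existential quantifiers followed by a system of polynomial equations,
with parameters (coefficients) from the ring. -/
def ExistDefinable {R : Type} [CommRing R] (X : Set R) : Prop :=
  ∃ (k m : ℕ) (P : Fin m → MvPolynomial (Fin (k + 1)) R),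
    ∀ x : R, x ∈ X ↔ ∃ y : Fin k → R, ∀ i : Fin m,
      MvPolynomial.eval (Fin.cons x y) (P i) = 0

/-- Solvability of the norm equation `N(y) = b·x^q + b^q` over (every realization of)
the tower `L₂(a^{1/q})/L₂`, where `L₁ = F((1+(b x^q+b^q)⁻¹)^{1/q})` and
`L₂ = L₁((1+(a+a⁻¹)b⁻¹)^{1/q})`. -/
def NormTower2Solvable (q : ℕ) (F : Type) [Field F] (a b x : F) : Prop :=
  ∀ (M1 : Type) [Field M1] [Algebra F M1] (α1 : M1),
    α1 ^ q = algebraMap F M1 (1 + (b * x ^ q + b ^ q)⁻¹) →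
    IntermediateField.adjoin F {α1} = ⊤ →
    ∀ (M2 : Type) [Field M2] [Algebra M1 M2] (α2 : M2),
      α2 ^ q = algebraMap M1 M2 (algebraMap F M1 (1 + (a + a⁻¹) * b⁻¹)) →
      IntermediateField.adjoin M1 {α2} = ⊤ →
      ∀ (M3 : Type) [Field M3] [Algebra M2 M3] (α3 : M3),
        α3 ^ q = algebraMap M2 M3 (algebraMap M1 M2 (algebraMap F M1 a)) →
        IntermediateField.adjoin M2 {α3} = ⊤ →
        ∃ y : M3, Algebra.norm M2 y = algebraMap M1 M2 (algebraMap F M1 (b * x ^ q + b ^ q))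

/-- Solvability of the norm equation `N(y) = b·x^q + b^q` over (every realization of)
the tower `L₄(a^{1/q})/L₄`, where `L₁ = F((1+(b x^q+b^q)⁻¹)^{1/q})`,
`L₃ = L₁((1+x⁻¹)^{1/q})` and `L₄ = L₃((1+(a+a⁻¹)x⁻¹)^{1/q})`. -/
def NormTower4Solvable (q : ℕ) (F : Type) [Field F] (a b x : F) : Prop :=
  ∀ (M1 : Type) [Field M1] [Algebra F M1] (α1 : M1),
    α1 ^ q = algebraMap F M1 (1 + (b * x ^ q + b ^ q)⁻¹) →
    IntermediateField.adjoin F {α1} = ⊤ →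
    ∀ (M3 : Type) [Field M3] [Algebra M1 M3] (α3 : M3),
      α3 ^ q = algebraMap M1 M3 (algebraMap F M1 (1 + x⁻¹)) →
      IntermediateField.adjoin M1 {α3} = ⊤ →
      ∀ (M4 : Type) [Field M4] [Algebra M3 M4] (α4 : M4),
        α4 ^ q = algebraMap M3 M4 (algebraMap M1 M3 (algebraMap F M1 (1 + (a + a⁻¹) * x⁻¹))) →
        IntermediateField.adjoin M3 {α4} = ⊤ →
        ∀ (M5 : Type) [Field M5] [Algebra M4 M5] (α5 : M5),
          α5 ^ q = algebraMap M4 M5 (algebraMap M3 M4 (algebraMap M1 M3 (algebraMap F M1 a))) →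
          IntermediateField.adjoin M4 {α5} = ⊤ →
          ∃ y : M5, Algebra.norm M4 y =
            algebraMap M3 M4 (algebraMap M1 M3 (algebraMap F M1 (b * x ^ q + b ^ q)))

/-- Unsolvability of the norm equation `N(y) = b·x^q + b^q` over (every realization of)
the tower `L₄(a^{1/q})/L₄` as in `NormTower4Solvable`. -/
def NormTower4Unsolvable (q : ℕ) (F : Type) [Field F] (a b x : F) : Prop :=
  ∀ (M1 : Type) [Field M1] [Algebra F M1] (α1 : M1),
    α1 ^ q = algebraMap F M1 (1 + (b * x ^ q + b ^ q)⁻¹) →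
    IntermediateField.adjoin F {α1} = ⊤ →
    ∀ (M3 : Type) [Field M3] [Algebra M1 M3] (α3 : M3),
      α3 ^ q = algebraMap M1 M3 (algebraMap F M1 (1 + x⁻¹)) →
      IntermediateField.adjoin M1 {α3} = ⊤ →
      ∀ (M4 : Type) [Field M4] [Algebra M3 M4] (α4 : M4),
        α4 ^ q = algebraMap M3 M4 (algebraMap M1 M3 (algebraMap F M1 (1 + (a + a⁻¹) * x⁻¹))) →
        IntermediateField.adjoin M3 {α4} = ⊤ →
        ∀ (M5 : Type) [Field M5] [Algebra M4 M5] (α5 : M5),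
          α5 ^ q = algebraMap M4 M5 (algebraMap M3 M4 (algebraMap M1 M3 (algebraMap F M1 a))) →
          IntermediateField.adjoin M4 {α5} = ⊤ →
          ¬ ∃ y : M5, Algebra.norm M4 y =
            algebraMap M3 M4 (algebraMap M1 M3 (algebraMap F M1 (b * x ^ q + b ^ q)))

/-- The integral closure `O_BK` of `𝔽_p[t]` in an algebraic extension `BK` of
`𝔽_p(t)`. -/
def ringOfIntegralFunctions (p : ℕ) [Fact p.Prime] (BK : Type) [Field BK]
    [Algebra (RatFunc (ZMod p)) BK] [Algebra (Polynomial (ZMod p)) BK]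
    [IsScalarTower (Polynomial (ZMod p)) (RatFunc (ZMod p)) BK] : Subring BK :=
  (integralClosure (Polynomial (ZMod p)) BK).toSubring

open Polynomial in
theorem aux_der {A : Type} [CommRing A] (D : Derivation ℤ A A) (J : Ideal A) {x : A}
    (hx : x ∈ J ^ 2) : D x ∈ J := by
  rw [pow_two] at hx
  refine Submodule.mul_induction_on hx ?_ ?_
  · intro m hm n hn
    rw [D.leibniz]
    exact J.add_mem (J.mul_mem_right _ hm) (J.mul_mem_right _ hn)
  · intro x y hx hy
    rw [map_add]; exact J.add_mem hx hy

open Polynomial in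
theorem aux_int {R K : Type} [CommRing R] [Field K] [Algebra R K] {f : K} (hf : IsIntegral R f)
    (q : R[X]) : IsIntegral R (aeval f q) := by
  have h := (aeval (⟨f, hf⟩ : integralClosure R K) q).2
  rw [aeval_subalgebra_coe] at h
  exact h

open Polynomial in
/-- `X - C a` divides an element of the integral closure for only finitely many `a`. -/
theorem aux_fin {k K : Type} [Field k] [Field K] [Algebra k[X] K] [FaithfulSMul k[X] K]
    {y : K} (hy : IsIntegral k[X] y) (hy0 : y ≠ 0) :
    {a : k | ∃ h : K, IsIntegral k[X] h ∧ y = algebraMap k[X] K (X - C a) * h}.Finite := by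
  set P := minpoly k[X] y with hP
  have hc0 : P.coeff 0 ≠ 0 := by
    intro h0
    have h1 : aeval y P = 0 := minpoly.aeval _ _
    have hpos : 0 < P.natDegree := minpoly.natDegree_pos hy
    rw [← P.divX_mul_X_add, h0] at h1
    simp [hy0] at h1
    have hd := natDegree_divX_eq_natDegree_tsub_one (p := P)
    have hne : P.divX ≠ 0 := by
      intro h2
      have h3 := P.divX_mul_X_add
      rw [h2, h0] at h3
      simp at h3
      rw [← h3] at hpos
      simp at hpos
    have := natDegree_le_natDegree (minpoly.IsIntegrallyClosed.degree_le_of_ne_zero hne h1)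
    rw [← hP] at this
    omega
  classical
  refine Set.Finite.subset (P.coeff 0).roots.toFinset.finite_toSet ?_
  rintro a ⟨h, hh, e⟩
  simp only [Finset.mem_coe, Multiset.mem_toFinset, mem_roots hc0]
  rw [← dvd_iff_isRoot]
  have h1 : aeval y P = 0 := minpoly.aeval _ _
  rw [← P.divX_mul_X_add] at h1
  simp only [map_add, map_mul, aeval_X, aeval_C] at h1
  have hz : IsIntegral k[X] (aeval y P.divX) := aux_int hy _
  have hw := (hz.mul hh).neg
  set w := -(aeval y P.divX * h)
  have h2 : aeval w (C (X - C a) * X - C (P.coeff 0) : k[X][X]) = 0 := by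
    simp only [map_sub, map_mul, aeval_X, aeval_C] at h1 e ⊢
    rw [e] at h1
    simp only [w]
    rw [eq_neg_of_add_eq_zero_right h1, e]
    ring
  have h3 := minpoly.isIntegrallyClosed_dvd hw h2
  have hn : (X - C a : k[X]) ≠ 0 := X_sub_C_ne_zero a
  obtain ⟨Q, hQ⟩ := h3
  have hQ0 : Q ≠ 0 := by
    rintro rfl
    have := congrArg (fun q => q.coeff 1) hQ
    simp at this
    exact hn this
  have hd := congrArg natDegree hQ
  rw [(minpoly.monic hw).natDegree_mul' hQ0] at hd
  have h4 : natDegree (C (X - C a) * X - C (P.coeff 0) : k[X][X]) = 1 := by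
    rw [natDegree_sub_C, natDegree_C_mul_X _ hn]
  have h5 := minpoly.natDegree_pos hw
  have h6 : Q.natDegree = 0 := by omega
  rw [eq_C_of_natDegree_eq_zero h6] at hQ
  have h7 : Q.coeff 0 ∣ P.coeff 0 := by
    have := congrArg (fun q => q.coeff 0) hQ
    simp at this
    exact ⟨-(minpoly k[X] w).coeff 0, by linear_combination -this⟩
  have h8 : Q.coeff 0 = X - C a := by
    have := congrArg leadingCoeff hQ
    rw [leadingCoeff_mul, (minpoly.monic hw).leadingCoeff] at this
    rw [leadingCoeff, h4] at this
    simp at this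
    exact this.symm
  rwa [h8] at h7

/-- the coefficientwise derivative -/
def auxDt (k : Type) [Field k] : Derivation ℤ (Polynomial (Polynomial k)) (Polynomial (Polynomial k)) :=
  PolynomialModule.equivPolynomialSelf.compDer
    (Derivation.mapCoeffs (Polynomial.derivative'.restrictScalars ℤ : Derivation ℤ (Polynomial k) (Polynomial k)))

theorem auxDt_coeff (k : Type) [Field k] (P : Polynomial (Polynomial k)) (n : ℕ) :
  (auxDt k P).coeff n = Polynomial.derivative (P.coeff n) := by
  rfl

open Polynomial in
theorem aux_main (p : ℕ) [Fact p.Prime] {k K : Type} [Field k] [CharP k p] [PerfectRing k p]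
    [Field K] [Algebra k[X] K] [FaithfulSMul k[X] K]
    {f : K} (hf : IsIntegral k[X] f) (S : Set k) (hS : S.Infinite)
    (H : ∀ a ∈ S, ∃ (b : k) (h : K), IsIntegral k[X] h ∧
      f = algebraMap k[X] K (C b) + algebraMap k[X] K (X - C a) * h) :
    ∃ g : k[X], algebraMap k[X] K g = f := by
  set P := minpoly k[X] f with hP
  have hPm : P.Monic := minpoly.monic hf
  have hpos : 0 < P.natDegree := minpoly.natDegree_pos hf
  by_cases hn : P.natDegree = 1
  · have h1 : aeval f P = 0 := minpoly.aeval _ _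
    rw [hPm.eq_X_add_C hn] at h1
    refine ⟨-P.coeff 0, ?_⟩
    simp at h1 ⊢
    linear_combination -h1
  exfalso
  have hn2 : 2 ≤ P.natDegree := by omega
  -- P lies in the square of the ideal of (a,b)
  have key : ∀ a ∈ S, ∀ D : Derivation ℤ k[X][X] k[X][X],
      ∃ h, IsIntegral k[X] h ∧ aeval f (D P) = algebraMap k[X] K (X - C a) * h := by
    intro a ha D
    obtain ⟨b, h, hh, e⟩ := H a ha
    set M := minpoly k[X] h with hM
    have hMm : M.Monic := minpoly.monic hh
    have hu : (X - C a : k[X]) ≠ 0 := X_sub_C_ne_zero a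
    have hdeg : M.natDegree ≤ P.natDegree := by
      have hl : (C (X - C a) * X + C (C b) : k[X][X]).natDegree = 1 := natDegree_linear hu
      have hz : aeval h (P.comp (C (X - C a) * X + C (C b))) = 0 := by
        rw [aeval_comp]
        have : aeval h (C (X - C a) * X + C (C b) : k[X][X]) = f := by
          rw [e]; simp; ring
        rw [this]; exact minpoly.aeval _ _
      have hne : P.comp (C (X - C a) * X + C (C b)) ≠ 0 := by
        intro h0
        have := congrArg natDegree h0
        rw [natDegree_comp, hl] at this
        simp at this; omega
      have := minpoly.IsIntegrallyClosed.degree_le_of_ne_zero hne hz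
      have := natDegree_le_natDegree this
      rwa [natDegree_comp, hl, mul_one] at this
    set P' := (M.scaleRoots (X - C a)).comp (X - C (C b)) with hP'
    have hP'm : P'.Monic := ((monic_scaleRoots_iff _).2 hMm).comp_X_sub_C _
    have hP'd : P'.natDegree = M.natDegree := by
      rw [hP', natDegree_comp, natDegree_X_sub_C, mul_one, natDegree_scaleRoots]
    have hP'0 : aeval f P' = 0 := by
      rw [hP', aeval_comp]
      have : aeval f (X - C (C b) : k[X][X]) = algebraMap k[X] K (X - C a) * h := by
        simp only [map_sub, aeval_X, aeval_C] at e ⊢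
        rw [e]; ring
      rw [this]
      exact scaleRoots_aeval_eq_zero (minpoly.aeval _ _)
    have hPP : P = P' := by
      have hd := minpoly.isIntegrallyClosed_dvd hf hP'0
      exact (eq_of_monic_of_dvd_of_natDegree_le hPm hP'm hd (by omega)).symm
    have hMP : M.natDegree = P.natDegree := by rw [hPP, hP'd]
    let J : Ideal k[X][X] := Ideal.span {X - C (C b), C (X - C a)}
    have hX : (X - C (C b) : k[X][X]) ∈ J := Ideal.subset_span (by simp)
    have hT : (C (X - C a) : k[X][X]) ∈ J := Ideal.subset_span (by simp)
    have hJ : P ∈ J ^ 2 := by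
      rw [hPP, hP', comp, eval₂_eq_sum_range]
      refine Ideal.sum_mem _ fun i hi => ?_
      rw [natDegree_scaleRoots, Finset.mem_range] at hi
      rw [coeff_scaleRoots, C_mul, C_pow, mul_assoc]
      refine Ideal.mul_mem_left _ _ ?_
      have h1 := Ideal.mul_mem_mul (Ideal.pow_mem_pow hT (M.natDegree - i)) (Ideal.pow_mem_pow hX i)
      rw [← pow_add J] at h1
      exact Ideal.pow_le_pow_right (by omega) h1
    have hD : D P ∈ J := aux_der D J hJ
    obtain ⟨u, v, huv⟩ := Ideal.mem_span_pair.1 hD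
    have hint : ∀ q : k[X][X], IsIntegral k[X] (aeval f q) := aux_int hf
    refine ⟨aeval f u * h + aeval f v, ((hint u).mul hh).add (hint v), ?_⟩
    rw [← huv]
    simp only [map_add, map_mul, map_sub, aeval_X, aeval_C] at e ⊢
    linear_combination (aeval f u) * e
  have key2 : ∀ D : Derivation ℤ k[X][X] k[X][X], aeval f (D P) = 0 := by
    intro D
    by_contra h0
    have hint : IsIntegral k[X] (aeval f (D P)) :=aux_int hf _
    exact hS ((aux_fin hint h0).subset fun a ha => key a ha D)
  have key3 : ∀ q : k[X][X], q.degree < P.degree → aeval f q = 0 → q = 0 := by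
    intro q hq h0
    by_contra hne
    exact absurd (minpoly.IsIntegrallyClosed.degree_le_of_ne_zero hne h0) (not_le.2 hq)
  have hdX : derivative P = 0 := by
    refine key3 _ (degree_derivative_lt hPm.ne_zero) ?_
    exact key2 (derivative'.restrictScalars ℤ)
  have hdt : auxDt k P = 0 := by
    refine key3 _ ?_ (key2 _)
    rw [degree_eq_natDegree hPm.ne_zero, degree_lt_iff_coeff_zero]
    intro m hm
    rw [auxDt_coeff]
    rcases hm.eq_or_lt with rfl | hm
    · rw [hPm.coeff_natDegree]; simp
    · rw [coeff_eq_zero_of_natDegree_lt hm]; simp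
  have hp0 : p ≠ 0 := (Fact.out : p.Prime).ne_zero
  have hlift : contract p P ∈ lifts (frobenius k[X] p) := by
    rw [lifts_iff_coeff_lifts]
    intro n
    rw [coeff_contract hp0]
    have h1 : derivative (P.coeff (n * p)) = 0 := by rw [← auxDt_coeff, hdt]; simp
    refine ⟨(contract p (P.coeff (n * p))).map (frobeniusEquiv k p).symm, ?_⟩
    · rw [frobenius_def, ← polynomial_expand_eq, expand_contract p h1 hp0]
  obtain ⟨G, hG⟩ := hlift
  have hPG : P = G ^ p := by
    rw [← map_frobenius_expand, map_expand]
    rw [coe_mapRingHom] at hG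
    rw [hG, expand_contract p hdX hp0]
  have h1 : aeval f P = 0 := minpoly.aeval _ _
  rw [hPG, map_pow] at h1
  have h2 := pow_eq_zero_iff hp0 |>.1 h1
  have hd : P.natDegree = p * G.natDegree := by rw [hPG, natDegree_pow]
  have hp2 := (Fact.out : p.Prime).two_le
  have : G = 0 := by
    refine key3 _ ?_ h2
    refine degree_lt_degree ?_
    have : 0 < G.natDegree := by
      rcases Nat.eq_zero_or_pos G.natDegree with h | h
      · rw [h] at hd; omega
      · exact h
    nlinarith
  rw [this] at hd
  simp at hd; omega

open FirstOrder FirstOrder.Language in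
theorem aux_def {R : Type} [CommRing R] (t : R) (k : Set R) (hk : FODefinable k) :
    FODefinable {f : R | ∀ a ∈ k, ∃ b ∈ k, ∃ h, f = b + (t - a) * h} := by
  let _ : FirstOrder.Ring.CompatibleRing R := FirstOrder.Ring.compatibleRingOfRing R
  have hk' : Set.Definable (Set.univ : Set R) FirstOrder.Language.ring
    {x : Fin 1 → R | x 0 ∈ k} := hk
  have ht : Set.Definable (Set.univ : Set R) FirstOrder.Language.ring
    {x : Fin 1 → R | x 0 ∈ ({t} : Set R)} := Set.Definable.singleton_of_mem _ (Set.mem_univ t)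
  -- variables: f, a, b, h, t
  have h1 : Set.Definable (Set.univ : Set R) FirstOrder.Language.ring
      {v : Fin 5 → R | v 0 + v 1 * v 3 = v 2 + v 4 * v 3} := by
    refine Set.Definable.mono (A := ∅) ?_ (Set.empty_subset _)
    rw [Set.empty_definable_iff]
    let x : Fin 5 → FirstOrder.Language.ring.Term (Fin 5) := fun i => Term.var i
    refine ⟨Term.equal (x 0 + x 1 * x 3) (x 2 + x 4 * x 3), ?_⟩
    ext v
    simp [x, Formula.realize_equal]
  have h2 : Set.Definable (Set.univ : Set R) FirstOrder.Language.ring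
      {v : Fin 5 → R | (v 0 + v 1 * v 3 = v 2 + v 4 * v 3) ∧ v 2 ∈ k ∧ v 4 = t} :=
    h1.inter ((hk'.preimage_comp (fun _ : Fin 1 => (2 : Fin 5))).inter
      (ht.preimage_comp (fun _ : Fin 1 => (4 : Fin 5))))
  have h3 := h2.image_comp (![0, 1] : Fin 2 → Fin 5)
  have h4 := ((hk'.preimage_comp (fun _ : Fin 1 => (1 : Fin 2))).inter h3.compl).image_comp
    (![0] : Fin 1 → Fin 2)
  have h5 := h4.compl
  show Set.Definable _ _ _
  convert h5 using 1
  ext w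
  simp only [Set.mem_ofPred_eq, Set.mem_compl_iff, Set.mem_image, Set.mem_inter_iff,
    Set.mem_preimage, not_exists, not_and]
  constructor
  · intro H v hv hw
    subst hw
    obtain ⟨b, hb, h, e⟩ := H (v 1) hv.1
    refine hv.2 ![v 0, v 1, b, h, t] ⟨?_, hb, rfl⟩ ?_
    · simp at e ⊢
      rw [e]; ring
    · ext i; fin_cases i <;> rfl
  · intro H a ha
    by_contra hcon
    refine H ![w 0, a] ⟨ha, ?_⟩ ?_
    · rintro v ⟨e, hb, rfl⟩ hv
      have e0 : v 0 = w 0 := congrFun hv 0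
      have e1 : v 1 = a := congrFun hv 1
      refine hcon ⟨v 2, hb, v 3, ?_⟩
      rw [← e0, ← e1]
      linear_combination e
    · ext i; fin_cases i; rfl

/-- Let `BK` be an algebraic extension of `𝔽_p(t)`, `O_BK` the
integral closure of `𝔽_p[t]` in `BK`, and `k` the constant field of `BK` (elements
algebraic over `𝔽_p`).  If `k` is infinite and `k` is first-order definable in the
ring `O_BK`, then the polynomial ring `k[t]` is first-order definable in `O_BK`. -/
theorem statement5 (p : ℕ) [Fact p.Prime]
    (BK : Type) [Field BK] [Algebra (RatFunc (ZMod p)) BK]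
    [Algebra.IsAlgebraic (RatFunc (ZMod p)) BK]
    [Algebra (Polynomial (ZMod p)) BK]
    [IsScalarTower (Polynomial (ZMod p)) (RatFunc (ZMod p)) BK]
    [Algebra (ZMod p) BK] [IsScalarTower (ZMod p) (Polynomial (ZMod p)) BK]
    (hinf : {x : BK | IsAlgebraic (ZMod p) x}.Infinite)
    (hdef : FODefinable
      {y : ↥(ringOfIntegralFunctions p BK) | IsAlgebraic (ZMod p) (y : BK)}) :
    FODefinable
      {y : ↥(ringOfIntegralFunctions p BK) | ∃ P : Polynomial BK,
        (∀ n : ℕ, IsAlgebraic (ZMod p) (P.coeff n)) ∧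
        Polynomial.eval (algebraMap (Polynomial (ZMod p)) BK Polynomial.X) P = (y : BK)} := by
  classical
  set t : BK := algebraMap (Polynomial (ZMod p)) BK Polynomial.X with ht
  have htint : IsIntegral (Polynomial (ZMod p)) t := isIntegral_algebraMap
  let tO : ↥(ringOfIntegralFunctions p BK) := ⟨t, htint⟩
  have hA := aux_def tO _ hdef
  convert hA using 1
  let k := algebraicClosure (ZMod p) BK
  have hkmem : ∀ x : BK, x ∈ k ↔ IsAlgebraic (ZMod p) x := fun x => mem_algebraicClosure_iff
  have : CharP BK p := charP_of_injective_algebraMap (algebraMap (ZMod p) BK).injective p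
  have : CharP k p := charP_of_injective_algebraMap (algebraMap (ZMod p) k).injective p
  have : PerfectField k := Algebra.IsAlgebraic.perfectField (K := ZMod p)
  have : PerfectRing k p := PerfectField.toPerfectRing p
  have hinj0 : Function.Injective (algebraMap (Polynomial (ZMod p)) BK) := by
    rw [IsScalarTower.algebraMap_eq (Polynomial (ZMod p)) (RatFunc (ZMod p)) BK]
    exact (algebraMap (RatFunc (ZMod p)) BK).injective.comp
      (IsFractionRing.injective (Polynomial (ZMod p)) (RatFunc (ZMod p)))
  have haev : ∀ q : Polynomial (ZMod p), Polynomial.aeval t q = algebraMap _ BK q := by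
    intro q
    have h1 : (Polynomial.aeval t : Polynomial (ZMod p) →ₐ[ZMod p] BK)
        = IsScalarTower.toAlgHom (ZMod p) (Polynomial (ZMod p)) BK := by
      apply Polynomial.algHom_ext
      simp [ht]
    rw [h1]; rfl
  have htr0 : Transcendental (ZMod p) t := by
    rw [transcendental_iff_injective]
    intro x y h
    rw [haev, haev] at h
    exact hinj0 h
  have htr : Transcendental k t := (Algebra.IsAlgebraic.transcendental_iff (R := ZMod p) (S := k)).1 htr0
  letI : Algebra (Polynomial k) BK := (Polynomial.aeval t : Polynomial k →ₐ[k] BK).toRingHom.toAlgebra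
  have hmap : ∀ q : Polynomial k, algebraMap (Polynomial k) BK q = Polynomial.aeval t q :=
    fun q => rfl
  have : FaithfulSMul (Polynomial k) BK :=
    (faithfulSMul_iff_algebraMap_injective _ _).2 (transcendental_iff_injective.1 htr)
  have hint : ∀ x : BK, IsIntegral (Polynomial (ZMod p)) x → IsIntegral (Polynomial k) x := by
    rintro x ⟨q, hq, h0⟩
    refine ⟨q.map (Polynomial.mapRingHom (algebraMap (ZMod p) k)), hq.map _, ?_⟩
    rw [Polynomial.eval₂_map, ← h0]
    congr 1
    refine RingHom.ext fun c => ?_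
    rw [RingHom.comp_apply, hmap, Polynomial.coe_mapRingHom, Polynomial.aeval_map_algebraMap, haev]
  have hkint : ∀ x : BK, IsAlgebraic (ZMod p) x → IsIntegral (Polynomial (ZMod p)) x :=
    fun x hx => (isAlgebraic_iff_isIntegral.1 hx).tower_top
  have hkt : ∀ q : Polynomial k, IsIntegral (Polynomial (ZMod p)) (Polynomial.aeval t q) := by
    intro q
    rw [Polynomial.aeval_eq_sum_range]
    refine IsIntegral.sum _ fun i _ => ?_
    rw [Algebra.smul_def]
    exact (hkint _ ((hkmem _).1 (q.coeff i).2)).mul (htint.pow i)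
  ext y
  simp only [Set.mem_ofPred_eq]
  constructor
  · rintro ⟨P, hP, hy⟩ a ha
    have hlift : P ∈ Polynomial.lifts (algebraMap k BK) := by
      rw [Polynomial.lifts_iff_coeff_lifts]
      intro n
      exact ⟨⟨P.coeff n, (hkmem _).2 (hP n)⟩, rfl⟩
    obtain ⟨g, hg⟩ := hlift
    rw [Polynomial.coe_mapRingHom] at hg
    have hgy : Polynomial.aeval t g = (y : BK) := by
      rw [← hy, ← hg, Polynomial.eval_map_algebraMap]
    let a' : k := ⟨a, (hkmem _).2 ha⟩
    obtain ⟨h, hh⟩ := Polynomial.X_sub_C_dvd_sub_C_eval (a := a') (p := g)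
    have hb : IsAlgebraic (ZMod p) ((g.eval a' : k) : BK) := (hkmem _).1 (g.eval a').2
    refine ⟨⟨(g.eval a' : k), hkint _ hb⟩, hb, ⟨Polynomial.aeval t h, hkt h⟩, ?_⟩
    apply Subtype.ext
    have := congrArg (Polynomial.aeval t) hh
    simp only [map_sub, map_mul, Polynomial.aeval_X, Polynomial.aeval_C] at this
    change (y : BK) = (g.eval a' : k) + (t - (a : BK)) * Polynomial.aeval t h
    rw [← hgy]
    exact sub_eq_iff_eq_add'.1 this
  · intro H
    have hkinf : (Set.univ : Set k).Infinite := by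
      rw [Set.infinite_univ_iff]
      have := hinf.to_subtype
      exact Infinite.of_injective
        (fun x : {x : BK | IsAlgebraic (ZMod p) x} => (⟨x.1, (hkmem _).2 x.2⟩ : k))
        (fun x y h => Subtype.ext (congrArg (fun z : k => (z : BK)) h))
    obtain ⟨g, hg⟩ := aux_main p (hint _ y.2) Set.univ hkinf (by
      intro a _
      have haa := (hkmem _).1 a.2
      obtain ⟨b, hb, h, e⟩ := H ⟨a, hkint _ haa⟩ haa
      refine ⟨⟨b, (hkmem _).2 hb⟩, h, hint _ h.2, ?_⟩
      rw [hmap, hmap]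
      simp only [map_sub, Polynomial.aeval_X, Polynomial.aeval_C]
      exact congrArg Subtype.val e)
    refine ⟨g.map (algebraMap k BK), fun n => ?_, ?_⟩
    · rw [Polynomial.coeff_map]
      exact (hkmem _).1 (g.coeff n).2
    · rw [Polynomial.eval_map_algebraMap, ← hg, hmap]
end
end

section
/- Let K be a global function field of characteristic p containing a primitive q-th root of unity, where q ≠ p is prime, and let 𝔭_K be a prime of K. Then the valuation ring O_{𝔭_K} = {x ∈ K : ord_{𝔭_K} x ≥ 0} is existentially (diophantine) definable over K in the language of rings with parameters from K. -/
noncomputable section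

section PartB1
open Polynomial

section LemD
variable {p : ℕ} [Fact p.Prime]

/-- monic polynomials of degree n -/
noncomputable def Mon8 (p n : ℕ) [Fact p.Prime] : Finset (ZMod p)[X] :=
  letI := Classical.decEq (ZMod p)[X]
  (Finset.univ : Finset (Fin n → ZMod p)).image
    (fun c => X ^ n + ∑ i : Fin n, C (c i) * X ^ (i : ℕ))

lemma mem_Mon8 {n : ℕ} {f : (ZMod p)[X]} : f ∈ Mon8 p n ↔ f.Monic ∧ f.natDegree = n := by
  classical
  unfold Mon8
  simp only [Finset.mem_image, Finset.mem_univ, true_and]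
  constructor
  · rintro ⟨c, rfl⟩
    have hd : (∑ i : Fin n, C (c i) * X ^ (i : ℕ)).degree < (n : WithBot ℕ) := by
      exact degree_sum_fin_lt c
    have hm : (X ^ n + ∑ i : Fin n, C (c i) * X ^ (i : ℕ) : (ZMod p)[X]).Monic :=
      monic_X_pow_add hd
    refine ⟨hm, ?_⟩
    rw [natDegree_eq_of_degree_eq (degree_add_eq_left_of_degree_lt (by rwa [degree_X_pow]))]
    simp
  · rintro ⟨hm, hn⟩
    refine ⟨fun i => f.coeff i, ?_⟩
    conv_rhs => rw [hm.as_sum, hn]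
    rw [Fin.sum_univ_eq_sum_range (fun i => C (f.coeff i) * X ^ i) n]

lemma sum_Mon8_zero {R : Type*} [CommRing R] [IsDomain R] (χ : (ZMod p)[X] → R)
    (m a : (ZMod p)[X]) (hm0 : m ≠ 0) (ha : IsCoprime a m)
    (hmul : ∀ f, χ (a * f) = χ a * χ f) (hper : ∀ f g, m ∣ f - g → χ f = χ g) (h1 : χ a ≠ 1)
    (n : ℕ) (hn : m.natDegree ≤ n) : ∑ f ∈ Mon8 p n, χ f = 0 := by
  classical
  set σ : (ZMod p)[X] → (ZMod p)[X] := fun f => f - f % m + (a * f) % m with hσ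
  have hmod : ∀ f : (ZMod p)[X], m ∣ f - f % m := fun f =>
    ⟨f / m, by rw [sub_eq_iff_eq_add]; exact (EuclideanDomain.div_add_mod f m).symm⟩
  have hσm : ∀ f, m ∣ a * f - σ f := by
    intro f
    have : a * f - σ f = (a * f - (a * f) % m) - (f - f % m) := by simp [hσ]; ring
    rw [this]; exact dvd_sub (hmod _) (hmod _)
  have hdl : ∀ f ∈ Mon8 p n, σ f ∈ Mon8 p n := by
    intro f hf
    rw [mem_Mon8] at hf ⊢
    have hdm : m.degree ≤ (n : WithBot ℕ) := (degree_le_natDegree).trans (by exact_mod_cast hn)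
    have hd : (- (f % m) + (a * f) % m).degree < f.degree := by
      rw [degree_eq_natDegree hf.1.ne_zero, hf.2]
      refine lt_of_lt_of_le ?_ hdm
      refine (degree_add_le _ _).trans_lt (max_lt ?_ ?_)
      · rw [degree_neg]; exact EuclideanDomain.mod_lt f hm0
      · exact EuclideanDomain.mod_lt _ hm0
    have e : σ f = f + (- (f % m) + (a * f) % m) := by simp [hσ]; ring
    rw [e]
    refine ⟨hf.1.add_of_left hd, ?_⟩
    rw [natDegree_eq_of_degree_eq (degree_add_eq_left_of_degree_lt hd), hf.2]
  have hmodeq : ∀ f g : (ZMod p)[X], m ∣ f - g → f % m = g % m := by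
    intro f g h
    have := (EuclideanDomain.mod_eq_zero).2 h
    rw [sub_mod] at this
    exact sub_eq_zero.1 this
  have hinj : Set.InjOn σ (Mon8 p n) := by
    intro f hf g hg h
    have h2 : m ∣ a * (f - g) := by
      have : a * (f - g) = (a * f - σ f) - (a * g - σ g) := by rw [h]; ring
      rw [this]; exact dvd_sub (hσm f) (hσm g)
    have h3 : m ∣ f - g := ha.symm.dvd_of_dvd_mul_left h2
    have h4 := hmodeq _ _ h3
    have h5 : (a * f) % m = (a * g) % m := hmodeq _ _ (by rw [← mul_sub]; exact h2)
    simp only [hσ, h4, h5] at h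
    simpa using h
  have hsurj : Set.SurjOn σ (Mon8 p n) (Mon8 p n) :=
    Finset.surjOn_of_injOn_of_card_le _ hdl hinj le_rfl
  have key : ∑ f ∈ Mon8 p n, χ f = χ a * ∑ f ∈ Mon8 p n, χ f := by
    rw [Finset.mul_sum]
    symm
    refine Finset.sum_nbij σ hdl hinj hsurj ?_
    intro f hf
    rw [← hmul]; exact hper _ _ (hσm f)
  have : (χ a - 1) * ∑ f ∈ Mon8 p n, χ f = 0 := by linear_combination -key
  rcases mul_eq_zero.1 this with h | h
  · exact absurd (sub_eq_zero.1 h) h1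
  · exact h

open Classical in
/-- sieved L-series -/
noncomputable def LS8 {R : Type*} [CommRing R] (χ : (ZMod p)[X] → R) (S : Finset (ZMod p)[X]) :
    PowerSeries R :=
  PowerSeries.mk fun n => ∑ f ∈ (Mon8 p n).filter (fun f => ∀ P ∈ S, ¬ P ∣ f), χ f

lemma LS8_insert {R : Type*} [CommRing R] (χ : (ZMod p)[X] → R)
    (hmul : ∀ f g, χ (f * g) = χ f * χ g) (S : Finset (ZMod p)[X])
    (hS : ∀ P ∈ S, P.Monic ∧ Irreducible P) (P : (ZMod p)[X]) (hP : P.Monic) (hPi : Irreducible P)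
    (hPS : P ∉ S) [DecidableEq (ZMod p)[X]] :
    LS8 χ S * (1 - PowerSeries.C (χ P) * PowerSeries.X ^ P.natDegree) = LS8 χ (insert P S) := by
  classical
  ext n
  rw [mul_sub, mul_one, map_sub]
  have hcop : ∀ Q ∈ S, ∀ g, Q ∣ P * g ↔ Q ∣ g := by
    intro Q hQ g
    refine ⟨fun h => ?_, fun h => h.mul_left _⟩
    rcases (hS Q hQ).2.prime.dvd_or_dvd h with h | h
    · exfalso
      have := (hS Q hQ).2.associated_of_dvd hPi h
      have := eq_of_monic_of_associated (hS Q hQ).1 hP this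
      exact hPS (this ▸ hQ)
    · exact h
  have h1 : (PowerSeries.coeff n) (LS8 χ S * (PowerSeries.C (χ P) * PowerSeries.X ^ P.natDegree))
      = ∑ f ∈ ((Mon8 p n).filter (fun f => ∀ P ∈ S, ¬ P ∣ f)).filter (fun f => P ∣ f), χ f := by
    rw [mul_left_comm, PowerSeries.coeff_C_mul, PowerSeries.coeff_mul_X_pow']
    split_ifs with hn
    · rw [LS8, PowerSeries.coeff_mk, Finset.mul_sum]
      refine Finset.sum_nbij (fun f => P * f) ?_ ?_ ?_ ?_
      · intro f hf
        simp only [Finset.mem_filter, mem_Mon8] at hf ⊢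
        refine ⟨⟨⟨hP.mul hf.1.1, ?_⟩, fun Q hQ => by rw [hcop Q hQ]; exact hf.2 Q hQ⟩, dvd_mul_right _ _⟩
        rw [hP.natDegree_mul hf.1.1, hf.1.2]; omega
      · intro f _ g _ h
        exact mul_left_cancel₀ hP.ne_zero h
      · intro f hf
        simp only [Finset.coe_filter, Finset.mem_filter, mem_Mon8, Set.mem_ofPred_eq] at hf
        obtain ⟨⟨⟨hfm, hfn⟩, hfS⟩, g, rfl⟩ := hf
        have hg : g.Monic := hP.of_mul_monic_left hfm
        refine ⟨g, ?_, rfl⟩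
        simp only [Finset.coe_filter, mem_Mon8, Set.mem_ofPred_eq]
        rw [hP.natDegree_mul hg] at hfn
        refine ⟨⟨hg, by omega⟩, fun Q hQ h => hfS Q hQ ((hcop Q hQ g).2 h)⟩
      · intro f _; rw [hmul]
    · rw [mul_zero]; symm
      apply Finset.sum_eq_zero
      intro f hf
      exfalso
      simp only [Finset.mem_filter, mem_Mon8] at hf
      have := natDegree_le_of_dvd hf.2 hf.1.1.1.ne_zero
      omega
  rw [h1, LS8, LS8, PowerSeries.coeff_mk, PowerSeries.coeff_mk, sub_eq_iff_eq_add,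
    ← Finset.sum_filter_add_sum_filter_not _ (fun f => P ∣ f), add_comm]
  congr 1
  rw [Finset.filter_filter]
  apply Finset.sum_congr _ (fun _ _ => rfl)
  ext f
  simp only [Finset.mem_filter, Finset.mem_insert, forall_eq_or_imp]
  tauto

/-- monic irreducibles of degree at most n -/
noncomputable def Irr8 (p n : ℕ) [Fact p.Prime] : Finset (ZMod p)[X] :=
  letI := Classical.decEq (ZMod p)[X]
  letI := Classical.decPred (fun f : (ZMod p)[X] => Irreducible f)
  ((Finset.range (n + 1)).biUnion (fun k => Mon8 p k)).filter Irreducible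

lemma mem_Irr8 {n : ℕ} {f : (ZMod p)[X]} :
    f ∈ Irr8 p n ↔ f.Monic ∧ Irreducible f ∧ f.natDegree ≤ n := by
  classical
  unfold Irr8
  simp only [Finset.mem_filter, Finset.mem_biUnion, Finset.mem_range, mem_Mon8]
  constructor
  · rintro ⟨⟨k, hk, hm, hd⟩, hi⟩; exact ⟨hm, hi, by omega⟩
  · rintro ⟨hm, hi, hd⟩; exact ⟨⟨_, by omega, hm, rfl⟩, hi⟩

lemma LS8_eq {R : Type*} [CommRing R] (χ : (ZMod p)[X] → R)
    (hmul : ∀ f g, χ (f * g) = χ f * χ g) (S : Finset (ZMod p)[X])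
    (hS : ∀ P ∈ S, P.Monic ∧ Irreducible P) :
    LS8 χ ∅ * ∏ P ∈ S, (1 - PowerSeries.C (χ P) * PowerSeries.X ^ P.natDegree) = LS8 χ S := by
  classical
  induction S using Finset.induction_on with
  | empty => simp
  | insert P S hPS ih =>
    rw [Finset.prod_insert hPS, mul_comm (1 - _), ← mul_assoc,
      ih (fun Q hQ => hS Q (Finset.mem_insert_of_mem hQ))]
    exact LS8_insert χ hmul S (fun Q hQ => hS Q (Finset.mem_insert_of_mem hQ)) P
      (hS P (Finset.mem_insert_self _ _)).1 (hS P (Finset.mem_insert_self _ _)).2 hPS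

lemma LS8_Irr {R : Type*} [CommRing R] (χ : (ZMod p)[X] → R) (h1 : χ 1 = 1) (n : ℕ) :
    ∃ r, LS8 χ (Irr8 p n) = 1 + PowerSeries.X ^ (n + 1) * r := by
  classical
  have : PowerSeries.X ^ (n + 1) ∣ LS8 χ (Irr8 p n) - 1 := by
    rw [PowerSeries.X_pow_dvd_iff]
    intro k hk
    rw [map_sub, LS8, PowerSeries.coeff_mk, PowerSeries.coeff_one]
    split_ifs with h0
    · subst h0
      have : (Mon8 p 0).filter (fun f => ∀ P ∈ Irr8 p n, ¬ P ∣ f) = {1} := by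
        ext f
        simp only [Finset.mem_filter, mem_Mon8, Finset.mem_singleton, mem_Irr8]
        constructor
        · rintro ⟨⟨hm, hd⟩, -⟩; exact hm.natDegree_eq_zero.1 hd
        · rintro rfl
          refine ⟨⟨monic_one, natDegree_one⟩, fun P hP h => ?_⟩
          exact hP.2.1.not_isUnit (isUnit_of_dvd_one h)
      rw [this]; simp [h1]
    · rw [sub_zero]
      apply Finset.sum_eq_zero
      intro f hf
      exfalso
      simp only [Finset.mem_filter, mem_Mon8, mem_Irr8] at hf
      have hnu : ¬ IsUnit f := fun h => h0 (by
        have := natDegree_eq_zero_of_isUnit h; omega)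
      obtain ⟨g, hgm, hgi, hgf⟩ := exists_monic_irreducible_factor f hnu
      refine hf.2 g ⟨hgm, hgi, ?_⟩ hgf
      have := natDegree_le_of_dvd hgf hf.1.1.ne_zero
      omega
  obtain ⟨r, hr⟩ := this
  exact ⟨r, by rw [← hr]; ring⟩

end LemD

end PartB1

section PartB2
open Polynomial

section LemD2
variable {p : ℕ} [hp : Fact p.Prime]

/-- logarithmic derivative mod x -/
noncomputable def dl8 (x f : (ZMod p)[X]) : (ZMod p)[X] ⧸ Ideal.span {x} :=
  Ideal.Quotient.mk _ (derivative f) * Ring.inverse (Ideal.Quotient.mk _ f)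

lemma isUnit_mk8 {x f : (ZMod p)[X]} :
    IsUnit (Ideal.Quotient.mk (Ideal.span {x}) f) ↔ IsCoprime f x := by
  constructor
  · intro h
    obtain ⟨g, hg⟩ := h.exists_right_inv
    obtain ⟨g, rfl⟩ := Ideal.Quotient.mk_surjective g
    rw [← map_mul, ← map_one (Ideal.Quotient.mk _), Ideal.Quotient.eq, Ideal.mem_span_singleton] at hg
    obtain ⟨k, hk⟩ := hg
    exact ⟨g, -k, by linear_combination hk⟩
  · rintro ⟨a, b, h⟩
    refine IsUnit.of_mul_eq_one (Ideal.Quotient.mk _ a) ?_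
    rw [← map_mul, ← map_one (Ideal.Quotient.mk _), Ideal.Quotient.eq, Ideal.mem_span_singleton]
    exact ⟨-b, by linear_combination h⟩

lemma dl8_mul {x f g : (ZMod p)[X]} (hf : IsCoprime f x) (hg : IsCoprime g x) :
    dl8 x (f * g) = dl8 x f + dl8 x g := by
  have hf' := isUnit_mk8.2 hf
  have hg' := isUnit_mk8.2 hg
  unfold dl8
  rw [derivative_mul, map_add, map_mul, map_mul, map_mul, Ring.mul_inverse_rev]
  have h1 := Ring.mul_inverse_cancel _ hf'
  have h2 := Ring.mul_inverse_cancel _ hg'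
  set F := Ideal.Quotient.mk (Ideal.span {x}) f
  set G := Ideal.Quotient.mk (Ideal.span {x}) g
  linear_combination (Ideal.Quotient.mk (Ideal.span {x}) (derivative f) * Ring.inverse F) * h2 +
    (Ideal.Quotient.mk (Ideal.span {x}) (derivative g) * Ring.inverse G) * h1

lemma dl8_congr {x f g : (ZMod p)[X]} (h : x ^ 2 ∣ f - g) : dl8 x f = dl8 x g := by
  obtain ⟨k, hk⟩ := h
  have e : f = g + x ^ 2 * k := by linear_combination hk
  have e1 : Ideal.Quotient.mk (Ideal.span {x}) f = Ideal.Quotient.mk _ g := by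
    rw [Ideal.Quotient.eq, Ideal.mem_span_singleton]
    exact ⟨x * k, by rw [e]; ring⟩
  have e2 : Ideal.Quotient.mk (Ideal.span {x}) (derivative f) =
      Ideal.Quotient.mk _ (derivative g) := by
    rw [Ideal.Quotient.eq, Ideal.mem_span_singleton]
    refine ⟨2 * derivative x * k + x * derivative k, ?_⟩
    rw [e, sq, derivative_add, derivative_mul, derivative_mul]
    ring
  unfold dl8
  rw [e1, e2]

open Classical in
/-- the character attached to a functional -/
noncomputable def chi8 (x : (ZMod p)[X]) (μ : ((ZMod p)[X] ⧸ Ideal.span {x}) →ₗ[ZMod p] ZMod p)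
    (f : (ZMod p)[X]) : ℂ :=
  if IsCoprime f x then ZMod.stdAddChar (μ (dl8 x f)) else 0

lemma chi8_one (x : (ZMod p)[X]) (μ) : chi8 x μ 1 = 1 := by
  unfold chi8
  rw [if_pos isCoprime_one_left]
  simp [dl8]

lemma chi8_mul (x : (ZMod p)[X]) (μ) (f g) : chi8 x μ (f * g) = chi8 x μ f * chi8 x μ g := by
  unfold chi8
  by_cases hf : IsCoprime f x
  · by_cases hg : IsCoprime g x
    · rw [if_pos hf, if_pos hg, if_pos (hf.mul_left hg), dl8_mul hf hg, map_add,
        AddChar.map_add_eq_mul]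
    · rw [if_neg hg, if_neg (fun h => hg h.of_mul_left_right), mul_zero]
  · rw [if_neg hf, if_neg (fun h => hf h.of_mul_left_left), zero_mul]

lemma chi8_per (x : (ZMod p)[X]) (μ) (f g) (h : x ^ 2 ∣ f - g) : chi8 x μ f = chi8 x μ g := by
  unfold chi8
  have : IsCoprime f x ↔ IsCoprime g x := by
    rw [← isUnit_mk8, ← isUnit_mk8]
    have e1 : Ideal.Quotient.mk (Ideal.span {x}) f = Ideal.Quotient.mk _ g := by
      rw [Ideal.Quotient.eq, Ideal.mem_span_singleton]
      exact (dvd_pow_self x two_ne_zero).trans h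
    rw [e1]
  rw [dl8_congr h]
  by_cases hf : IsCoprime f x
  · rw [if_pos hf, if_pos (this.1 hf)]
  · rw [if_neg hf, if_neg (fun h => hf (this.2 h))]

lemma prod_stdAddChar (Y : PowerSeries ℂ) :
    ∏ k : ZMod p, (1 - PowerSeries.C (ZMod.stdAddChar k : ℂ) * Y) = 1 - Y ^ p := by
  classical
  have hpr : IsPrimitiveRoot (Complex.exp (2 * Real.pi * Complex.I / p)) p :=
    Complex.isPrimitiveRoot_exp p hp.out.ne_zero
  have hC : Function.Injective (PowerSeries.C (R := ℂ)) := PowerSeries.C_injective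
  have hpr2 := hpr.map_of_injective hC
  have := hpr2.pow_sub_pow_eq_prod_sub_mul (1 : PowerSeries ℂ) Y hp.out.pos
  rw [one_pow] at this
  rw [this]
  symm
  have hinj : Function.Injective (fun k : ZMod p => PowerSeries.C (ZMod.stdAddChar k : ℂ)) :=
    hC.comp ZMod.injective_stdAddChar
  have him : Polynomial.nthRootsFinset p (1 : PowerSeries ℂ) =
      (Finset.univ : Finset (ZMod p)).image (fun k => PowerSeries.C (ZMod.stdAddChar k : ℂ)) := by
    symm
    apply Finset.eq_of_subset_of_card_le
    · intro y hy
      simp only [Finset.mem_image, Finset.mem_univ, true_and] at hy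
      obtain ⟨k, rfl⟩ := hy
      rw [Polynomial.mem_nthRootsFinset hp.out.pos, ← map_pow, ← AddChar.map_nsmul_eq_pow]
      simp
    · rw [hpr2.card_nthRootsFinset, Finset.card_image_of_injective _ hinj]
      simp [ZMod.card]
  rw [him, Finset.prod_image (fun a _ b _ h => hinj h)]

/-- local factor has a nonnegative inverse -/
lemma geom8 (d : ℕ) (hd : 0 < d) : ∃ g : PowerSeries ℕ, (PowerSeries.map (Nat.castRingHom ℂ) g) *
    (1 - PowerSeries.X ^ d) = 1 ∧ PowerSeries.coeff 0 g = 1 ∧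
    ∀ k, 1 ≤ PowerSeries.coeff (d * k) g := by
  refine ⟨PowerSeries.mk fun n => if d ∣ n then 1 else 0, ?_, by simp, by simp⟩
  ext n
  rw [mul_sub, mul_one, map_sub, PowerSeries.coeff_mul_X_pow', PowerSeries.coeff_map,
    PowerSeries.coeff_map, PowerSeries.coeff_mk, PowerSeries.coeff_mk, PowerSeries.coeff_one]
  by_cases h : d ≤ n
  · have : d ∣ n - d ↔ d ∣ n := Nat.dvd_sub_iff_left h dvd_rfl
    have h0 : n ≠ 0 := by omega
    simp [h, this, h0]
  · by_cases h0 : n = 0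
    · subst h0; simp; omega
    · have : ¬ d ∣ n := fun h' => h (Nat.le_of_dvd (by omega) h')
      simp [h, h0, this]

theorem lemD8 (x : (ZMod p)[X]) (hx : 0 < x.natDegree)
    (lam : ((ZMod p)[X] ⧸ Ideal.span {x}) →ₗ[ZMod p] ZMod p)
    (a : (ZMod p)[X]) (ha : IsCoprime a x) (hla : lam (dl8 x a) = 0) :
    dl8 x a ∈ Submodule.span (ZMod p) {w | ∃ P : (ZMod p)[X], P.Monic ∧ Irreducible P ∧
      IsCoprime P x ∧ lam (dl8 x P) = 0 ∧ w = dl8 x P} := by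
  classical
  by_contra hcon
  obtain ⟨ψ, hψa, hψ⟩ := Submodule.exists_le_ker_of_notMem hcon
  have hψP : ∀ P : (ZMod p)[X], P.Monic → Irreducible P → IsCoprime P x → lam (dl8 x P) = 0 →
      ψ (dl8 x P) = 0 := fun P h1 h2 h3 h4 =>
    hψ (Submodule.subset_span ⟨P, h1, h2, h3, h4, rfl⟩)
  have hx0 : x ≠ 0 := by rintro rfl; simp at hx
  -- L-functions are polynomials
  have hpoly : ∀ j : ZMod p, ∃ G : ℂ[X], LS8 (chi8 x (ψ + j • lam)) ∅ = (G : PowerSeries ℂ) := by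
    intro j
    refine ⟨PowerSeries.trunc ((x ^ 2).natDegree) (LS8 (chi8 x (ψ + j • lam)) ∅), ?_⟩
    ext n
    rw [Polynomial.coeff_coe, PowerSeries.coeff_trunc]
    split_ifs with hn
    · rfl
    · rw [LS8, PowerSeries.coeff_mk]
      simp only [Finset.notMem_empty, false_imp_iff, implies_true, Finset.filter_true]
      refine sum_Mon8_zero _ (x ^ 2) a (pow_ne_zero _ hx0) ha.pow_right (fun f => chi8_mul _ _ _ _)
        (fun f g => chi8_per _ _ _ _) ?_ n (by omega)
      unfold chi8
      rw [if_pos ha]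
      intro h
      have : (ψ + j • lam) (dl8 x a) = 0 := by
        apply ZMod.injective_stdAddChar
        rw [h, AddChar.map_zero_eq_one]
      simp [hla] at this
      exact hψa this
  choose G hG using hpoly
  -- local factors
  have hloc : ∀ P : (ZMod p)[X], P.Monic → Irreducible P →
      ∃ g : PowerSeries ℕ, (PowerSeries.map (Nat.castRingHom ℂ) g) *
        (∏ j : ZMod p, (1 - PowerSeries.C (chi8 x (ψ + j • lam) P) * PowerSeries.X ^ P.natDegree)) = 1
        ∧ PowerSeries.coeff 0 g = 1 ∧
        (IsCoprime P x → ∀ k, 1 ≤ PowerSeries.coeff (p * P.natDegree * k) g) := by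
    intro P hPm hPi
    have hdpos : 0 < P.natDegree := hPi.natDegree_pos
    by_cases hPx : IsCoprime P x
    · by_cases hl : lam (dl8 x P) = 0
      · obtain ⟨g, hg1, hg2, hg3⟩ := geom8 P.natDegree hdpos
        have h0 := hψP P hPm hPi hPx hl
        refine ⟨g ^ p, ?_, ?_, fun _ k => ?_⟩
        · have : ∀ j : ZMod p, chi8 x (ψ + j • lam) P = 1 := by
            intro j
            unfold chi8
            rw [if_pos hPx]
            simp [h0, hl]
          simp only [this, map_one, one_mul, Finset.prod_const, Finset.card_univ, ZMod.card]
          rw [map_pow, ← mul_pow, hg1, one_pow]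
        · rw [PowerSeries.coeff_zero_eq_constantCoeff_apply] at hg2 ⊢
          rw [map_pow, hg2, one_pow]
        · obtain ⟨r, hr⟩ : ∃ r, p = r + 1 := ⟨p - 1, by have := hp.out.pos; omega⟩
          have key : ∀ t, t = r + 1 → 1 ≤ PowerSeries.coeff (t * P.natDegree * k) (g ^ t) := ?_
          · exact key p hr
          rintro t rfl
          rw [pow_succ, PowerSeries.coeff_mul]
          have : ((0 : ℕ), (r + 1) * P.natDegree * k) ∈
              Finset.HasAntidiagonal.antidiagonal ((r + 1) * P.natDegree * k) := by simp
          refine le_trans ?_ (Finset.single_le_sum (f := fun q : ℕ × ℕ =>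
            PowerSeries.coeff q.1 (g ^ r) * PowerSeries.coeff q.2 g) (fun _ _ => Nat.zero_le _) this)
          have e : PowerSeries.coeff 0 (g ^ r) = 1 := by
            rw [PowerSeries.coeff_zero_eq_constantCoeff_apply] at hg2 ⊢
            rw [map_pow, hg2, one_pow]
          simp only [e, one_mul]
          rw [show (r + 1) * P.natDegree * k = P.natDegree * ((r + 1) * k) by ring]
          exact hg3 _
      · obtain ⟨g, hg1, hg2, hg3⟩ := geom8 (p * P.natDegree) (Nat.mul_pos hp.out.pos hdpos)
        refine ⟨g, ?_, hg2, fun _ => hg3⟩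
        refine Eq.trans ?_ hg1
        congr 1
        rw [mul_comm p, pow_mul, ← prod_stdAddChar (p := p)]
        refine Fintype.prod_bijective (fun j : ZMod p => ψ (dl8 x P) + j * lam (dl8 x P)) ?_ _ _ ?_
        · rw [← Finite.injective_iff_bijective]
          intro i j hij
          exact mul_right_cancel₀ hl (add_left_cancel hij)
        · intro j
          unfold chi8
          rw [if_pos hPx]
          simp
    · refine ⟨1, ?_, by simp, fun h => absurd h hPx⟩
      have : ∀ j : ZMod p, chi8 x (ψ + j • lam) P = 0 := fun j => if_neg hPx
      simp [this]
  choose! g hg1 hg2 hg3 using hloc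
  -- a prime not dividing x
  obtain ⟨P₁, hP₁m, hP₁i, hP₁d⟩ := exists_monic_irreducible_factor (1 + x) (by
    intro h
    have := natDegree_eq_zero_of_isUnit h
    rw [add_comm, ← C_1, natDegree_add_C] at this
    omega)
  have hP₁x : IsCoprime P₁ x := by
    obtain ⟨k, hk⟩ := hP₁d
    exact ⟨k, -1, by linear_combination -hk⟩
  set GG : ℂ[X] := ∏ j : ZMod p, G j with hGG
  have hmain : ∀ n, PowerSeries.coeff n (GG : PowerSeries ℂ) =
      ((PowerSeries.coeff n (∏ P ∈ Irr8 p n, g P) : ℕ) : ℂ) := by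
    intro n
    have h1 : ∀ j : ZMod p, ∃ r, (G j : PowerSeries ℂ) * ∏ P ∈ Irr8 p n,
        (1 - PowerSeries.C (chi8 x (ψ + j • lam) P) * PowerSeries.X ^ P.natDegree) =
        1 + PowerSeries.X ^ (n + 1) * r := by
      intro j
      rw [← hG, LS8_eq _ (chi8_mul x _) _ (fun P hP => ⟨(mem_Irr8.1 hP).1, (mem_Irr8.1 hP).2.1⟩)]
      exact LS8_Irr _ (chi8_one x _) n
    choose r hr using h1
    have h2 : ∃ R, ∏ j : ZMod p, (1 + PowerSeries.X ^ (n + 1) * r j) =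
        1 + PowerSeries.X ^ (n + 1) * R := by
      have : ∀ s : Finset (ZMod p), ∃ R, ∏ j ∈ s, (1 + PowerSeries.X ^ (n + 1) * r j) =
          1 + PowerSeries.X ^ (n + 1) * R := by
        intro s
        induction s using Finset.induction_on with
        | empty => exact ⟨0, by simp⟩
        | insert i s his ih =>
          obtain ⟨R, hR⟩ := ih
          rw [Finset.prod_insert his, hR]
          exact ⟨r i + R + PowerSeries.X ^ (n + 1) * r i * R, by ring⟩
      exact this _
    obtain ⟨R, hR⟩ := h2
    have hcoe : (GG : PowerSeries ℂ) = ∏ j : ZMod p, (G j : PowerSeries ℂ) := by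
      rw [hGG]
      exact map_prod (Polynomial.coeToPowerSeries.ringHom (R := ℂ)) _ _
    have h3 : (GG : PowerSeries ℂ) * ∏ P ∈ Irr8 p n, ∏ j : ZMod p,
        (1 - PowerSeries.C (chi8 x (ψ + j • lam) P) * PowerSeries.X ^ P.natDegree) =
        1 + PowerSeries.X ^ (n + 1) * R := by
      rw [Finset.prod_comm, hcoe, ← Finset.prod_mul_distrib, ← hR]
      exact Finset.prod_congr rfl (fun j _ => hr j)
    have h4 : PowerSeries.map (Nat.castRingHom ℂ) (∏ P ∈ Irr8 p n, g P) *
        ∏ P ∈ Irr8 p n, ∏ j : ZMod p,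
        (1 - PowerSeries.C (chi8 x (ψ + j • lam) P) * PowerSeries.X ^ P.natDegree) = 1 := by
      rw [map_prod, ← Finset.prod_mul_distrib]
      exact Finset.prod_eq_one (fun P hP => hg1 P (mem_Irr8.1 hP).1 (mem_Irr8.1 hP).2.1)
    have h5 : (GG : PowerSeries ℂ) = PowerSeries.map (Nat.castRingHom ℂ) (∏ P ∈ Irr8 p n, g P) +
        PowerSeries.X ^ (n + 1) * (R * PowerSeries.map (Nat.castRingHom ℂ) (∏ P ∈ Irr8 p n, g P)) := by
      linear_combination (PowerSeries.map (Nat.castRingHom ℂ) (∏ P ∈ Irr8 p n, g P)) * h3 -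
        (GG : PowerSeries ℂ) * h4
    rw [h5, map_add, PowerSeries.coeff_X_pow_mul', if_neg (by omega), add_zero,
      PowerSeries.coeff_map]
    rfl
  -- contradiction
  set k := GG.natDegree + 1 with hk
  set n := p * P₁.natDegree * k with hn
  have hdpos : 0 < P₁.natDegree := hP₁i.natDegree_pos
  have hpd : 0 < p * P₁.natDegree := Nat.mul_pos hp.out.pos hdpos
  have hnk : k ≤ n := Nat.le_mul_of_pos_left _ hpd
  have hmem : P₁ ∈ Irr8 p n := by
    rw [mem_Irr8]
    refine ⟨hP₁m, hP₁i, ?_⟩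
    calc P₁.natDegree ≤ p * P₁.natDegree := Nat.le_mul_of_pos_left _ hp.out.pos
      _ ≤ _ := Nat.le_mul_of_pos_right _ (by omega)
  have h0 := hmain n
  rw [Polynomial.coeff_coe, Polynomial.coeff_eq_zero_of_natDegree_lt (by omega)] at h0
  have h0' : PowerSeries.coeff n (∏ P ∈ Irr8 p n, g P) = 0 := by exact_mod_cast h0.symm
  rw [← Finset.mul_prod_erase _ _ hmem, PowerSeries.coeff_mul] at h0'
  have hz := Finset.sum_eq_zero_iff.1 h0' (n, 0) (by simp)
  have hc0 : PowerSeries.coeff 0 (∏ P ∈ (Irr8 p n).erase P₁, g P) = 1 := by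
    rw [PowerSeries.coeff_zero_eq_constantCoeff_apply, map_prod]
    refine Finset.prod_eq_one (fun P hP => ?_)
    have := mem_Irr8.1 (Finset.mem_of_mem_erase hP)
    rw [← PowerSeries.coeff_zero_eq_constantCoeff_apply]
    exact hg2 P this.1 this.2.1
  simp only [hc0, mul_one] at hz
  have := hg3 P₁ hP₁m hP₁i hP₁x k
  rw [← hn, hz] at this
  omega

end LemD2

end PartB2

section PartC1
open Polynomial

section GoodPrime
variable {p : ℕ} [hp : Fact p.Prime]

lemma add_hilbert90 {κ : Type*} [Field κ] [Algebra (ZMod p) κ] [FiniteDimensional (ZMod p) κ]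
    (u : κ) (hu : Algebra.trace (ZMod p) κ u = 0) : ∃ r : κ, u = r ^ p - r := by
  have : Finite κ := Module.finite_of_finite (ZMod p)
  have := Fintype.ofFinite κ
  set φ := FiniteField.frobeniusAlgEquivOfAlgebraic (ZMod p) κ with hφ
  have hφ' : ∀ r, φ r = r ^ p := by
    intro r
    have := congrFun (FiniteField.coe_frobeniusAlgEquivOfAlgebraic (ZMod p) κ) r
    rw [hφ, this, ZMod.card]
  set W : κ →ₗ[ZMod p] κ := φ.toLinearMap - LinearMap.id with hW
  have hle : LinearMap.range W ≤ LinearMap.ker (Algebra.trace (ZMod p) κ) := by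
    rintro _ ⟨r, rfl⟩
    rw [LinearMap.mem_ker, hW, LinearMap.sub_apply, map_sub, LinearMap.id_apply, sub_eq_zero]
    exact Algebra.trace_eq_of_algEquiv φ r
  have hker : Module.finrank (ZMod p) (LinearMap.ker W) ≤ 1 := by
    refine finrank_le_one ⟨1, ?_⟩ ?_
    · rw [LinearMap.mem_ker]; simp [hW, hφ']
    · rintro ⟨r, hr⟩
      rw [LinearMap.mem_ker, hW, LinearMap.sub_apply, LinearMap.id_apply, sub_eq_zero] at hr
      have hr' : r ^ p = r := by rw [← hφ']; exact hr
      have : r ∈ (algebraMap (ZMod p) κ).range := by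
        have : CharP κ p := charP_of_injective_algebraMap (algebraMap (ZMod p) κ).injective p
        have h := (Subfield.mem_bot_iff_pow_eq_self κ p).2 hr'
        rw [Subfield.bot_eq_of_zMod_algebra p] at h
        exact h
      obtain ⟨c, hc⟩ := this
      exact ⟨c, by ext; simp [Algebra.smul_def, hc]⟩
  have h1 := LinearMap.finrank_range_add_finrank_ker W
  have h2 := LinearMap.finrank_range_add_finrank_ker (Algebra.trace (ZMod p) κ)
  have h3 : Module.finrank (ZMod p) (LinearMap.range (Algebra.trace (ZMod p) κ)) = 1 := by
    rw [LinearMap.range_eq_top.2 (Algebra.trace_surjective (ZMod p) κ)]; simp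
  have heq := Submodule.eq_of_le_of_finrank_le hle (by omega)
  have : u ∈ LinearMap.range W := by rw [heq]; exact hu
  obtain ⟨r, hr⟩ := this
  exact ⟨r, by rw [← hr, ← hφ']; rfl⟩

/-- top coefficient of the remainder mod x -/
noncomputable def lam8 (x : (ZMod p)[X]) : ((ZMod p)[X] ⧸ Ideal.span {x}) →ₗ[ZMod p] ZMod p :=
  have key : ∀ f g : (ZMod p)[X], Ideal.Quotient.mk (Ideal.span {x}) f = Ideal.Quotient.mk _ g →
      f % x = g % x := by
    intro f g h
    rw [Ideal.Quotient.eq, Ideal.mem_span_singleton] at h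
    have := (EuclideanDomain.mod_eq_zero).2 h
    rw [sub_mod] at this
    exact sub_eq_zero.1 this
  { toFun := fun v => (Function.surjInv Ideal.Quotient.mk_surjective v % x).coeff (x.natDegree - 1)
    map_add' := by
      intro v w
      rw [← coeff_add, ← add_mod]
      congr 1
      apply key
      rw [map_add]
      simp only [Function.surjInv_eq Ideal.Quotient.mk_surjective]
    map_smul' := by
      intro c v
      have hs : ∀ f : (ZMod p)[X], c • (f % x) = (c • f) % x := by
        intro f
        rw [Polynomial.mod_def, Polynomial.mod_def, smul_modByMonic]
      rw [RingHom.id_apply, ← coeff_smul, hs]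
      congr 1
      apply key
      have h2 : ∀ f : (ZMod p)[X], Ideal.Quotient.mk (Ideal.span {x}) (c • f) =
        c • Ideal.Quotient.mk (Ideal.span {x}) f := fun f => rfl
      rw [h2]
      simp only [Function.surjInv_eq Ideal.Quotient.mk_surjective] }

lemma lam8_mk (x f : (ZMod p)[X]) :
    lam8 x (Ideal.Quotient.mk _ f) = (f % x).coeff (x.natDegree - 1) := by
  unfold lam8
  simp only [LinearMap.coe_mk, AddHom.coe_mk]
  congr 1
  have h := Function.surjInv_eq Ideal.Quotient.mk_surjective (Ideal.Quotient.mk (Ideal.span {x}) f)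
  rw [Ideal.Quotient.eq, Ideal.mem_span_singleton] at h
  have := (EuclideanDomain.mod_eq_zero).2 h
  rw [sub_mod] at this
  exact sub_eq_zero.1 this

lemma trace_top8 (P : (ZMod p)[X]) (hPm : P.Monic) [hPi : Fact (Irreducible P)] (a u : (ZMod p)[X])
    (ha : a.degree < P.degree) (h : P ∣ a - derivative P * u) :
    haveI := hPm.finite_adjoinRoot
    Algebra.trace (ZMod p) (AdjoinRoot P) (AdjoinRoot.mk P u) = a.coeff (P.natDegree - 1) := by
  have := hPm.finite_adjoinRoot
  set pb := AdjoinRoot.powerBasis hPm.ne_zero with hpb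
  have hgen : pb.gen = AdjoinRoot.root P := rfl
  have hmin : minpoly (ZMod p) pb.gen = P := by
    rw [hgen, AdjoinRoot.minpoly_root hPm.ne_zero, hPm.leadingCoeff]; simp
  have hdim : pb.dim = P.natDegree := AdjoinRoot.powerBasis_dim _
  have hpos : 0 < P.natDegree := hPi.out.natDegree_pos
  have hgenI : IsIntegral (ZMod p) pb.gen := pb.isIntegral_gen
  have hdual := Module.Basis.traceDual_powerBasis_eq pb ⟨P.natDegree - 1, by omega⟩
  have hnd := natDegree_minpolyDiv_succ hgenI
  have hmon := minpolyDiv_monic hgenI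
  rw [hmin] at hnd hdual
  have hc1 : (minpolyDiv (ZMod p) pb.gen).coeff (P.natDegree - 1) = 1 := by
    rw [show P.natDegree - 1 = (minpolyDiv (ZMod p) pb.gen).natDegree by omega]
    exact hmon
  simp only [hc1] at hdual
  have hP' : aeval pb.gen (derivative P) = AdjoinRoot.mk P (derivative P) := by
    rw [hgen, AdjoinRoot.aeval_eq]
  have hsep : AdjoinRoot.mk P (derivative P) ≠ 0 := by
    have := (Algebra.IsSeparable.isSeparable (ZMod p) pb.gen).aeval_derivative_ne_zero
      (minpoly.aeval (ZMod p) pb.gen)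
    rw [hmin, hP'] at this
    exact this
  rw [hP'] at hdual
  have hu : AdjoinRoot.mk P u = AdjoinRoot.mk P a *
      pb.basis.traceDual ⟨P.natDegree - 1, by omega⟩ := by
    rw [hdual, mul_one_div, eq_div_iff hsep, ← map_mul]
    symm
    rw [AdjoinRoot.mk_eq_mk, mul_comm u]
    exact h
  have hadeg : a.natDegree < P.natDegree := by
    by_cases h0 : a = 0
    · subst h0; simpa using hpos
    · exact natDegree_lt_natDegree h0 ha
  have hasum : AdjoinRoot.mk P a = ∑ i : Fin pb.dim, (a.coeff i) • pb.basis i := by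
    simp only [PowerBasis.coe_basis]
    rw [Fin.sum_univ_eq_sum_range (fun i => a.coeff i • pb.gen ^ i) pb.dim, hdim, hgen,
      ← AdjoinRoot.aeval_eq, aeval_eq_sum_range' hadeg]
  rw [hu, hasum, Finset.sum_mul, map_sum]
  simp only [smul_mul_assoc, map_smul, Module.Basis.trace_mul_traceDual]
  rw [Finset.sum_eq_single ⟨P.natDegree - 1, by omega⟩]
  · simp
  · intro b _ hb
    simp [hb]
  · simp

lemma good8 (x P : (ZMod p)[X]) (hx : 0 < x.natDegree) (hPm : P.Monic) (hPi : Irreducible P)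
    (hPx : IsCoprime P x) (h : lam8 x (dl8 x P) = 0) : ∃ r : (ZMod p)[X], P ∣ 1 - x * (r ^ p - r) := by
  obtain ⟨w, u, hwu⟩ := hPx
  have hpos : 0 < P.natDegree := hPi.natDegree_pos
  have hx0 : x ≠ 0 := by rintro rfl; simp at hx
  set a := (derivative P * u) % P with ha
  set b := (derivative P * w) % x with hb
  have had : a.degree < P.degree := EuclideanDomain.mod_lt _ hPm.ne_zero
  have hbd : b.degree < x.degree := EuclideanDomain.mod_lt _ hx0
  have hmod : ∀ f m : (ZMod p)[X], m ∣ f % m - f := fun f m =>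
    ⟨-(f / m), by linear_combination (EuclideanDomain.div_add_mod f m)⟩
  have ha1 : P ∣ a - derivative P * u := hmod _ _
  have hb1 : x ∣ b - derivative P * w := hmod _ _
  have hdl : dl8 x P = Ideal.Quotient.mk _ (derivative P * w) := by
    unfold dl8
    rw [map_mul]
    congr 1
    have h1 : Ideal.Quotient.mk (Ideal.span {x}) w * Ideal.Quotient.mk (Ideal.span {x}) P = 1 := by
      rw [← map_mul, ← map_one (Ideal.Quotient.mk _), Ideal.Quotient.eq, Ideal.mem_span_singleton]
      exact ⟨-u, by linear_combination hwu⟩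
    have h2 := Ring.mul_inverse_cancel _ (IsUnit.of_mul_eq_one_right _ h1)
    linear_combination (Ideal.Quotient.mk (Ideal.span {x}) w) * h2 - (Ring.inverse (Ideal.Quotient.mk (Ideal.span {x}) P)) * h1
  rw [hdl, lam8_mk, ← hb] at h
  have hnda : a.natDegree < P.natDegree := by
    by_cases h0 : a = 0
    · rw [h0]; simpa using hpos
    · exact natDegree_lt_natDegree h0 had
  have hndb : b.natDegree < x.natDegree := by
    by_cases h0 : b = 0
    · rw [h0]; simpa using hx
    · exact natDegree_lt_natDegree h0 hbd
  have hndP : (derivative P).natDegree ≤ P.natDegree - 1 := natDegree_derivative_le P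
  have heq : derivative P - a * x - b * P = 0 := by
    have hdvd : P * x ∣ derivative P - a * x - b * P := by
      refine IsCoprime.mul_dvd ⟨w, u, hwu⟩ ?_ ?_
      · obtain ⟨k, hk⟩ := ha1
        exact ⟨derivative P * w - k * x - b, by linear_combination (-x) * hk - (derivative P) * hwu⟩
      · obtain ⟨k, hk⟩ := hb1
        exact ⟨derivative P * u - k * P - a, by linear_combination (-P) * hk - (derivative P) * hwu⟩
    by_contra hne
    have h1 := natDegree_le_of_dvd hdvd hne
    rw [natDegree_mul hPm.ne_zero hx0] at h1
    have h2 : (derivative P - a * x - b * P).natDegree ≤ P.natDegree + x.natDegree - 1 := by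
      refine (natDegree_sub_le_of_le (natDegree_sub_le_of_le (m := P.natDegree + x.natDegree - 1)
        (n := P.natDegree + x.natDegree - 1) (by omega) ?_)
        (n := P.natDegree + x.natDegree - 1) ?_).trans (by simp)
      · have := natDegree_mul_le (p := a) (q := x); omega
      · have := natDegree_mul_le (p := b) (q := P); omega
    omega
  have htop : a.coeff (P.natDegree - 1) = 0 := by
    have hc := congrArg (fun f => coeff f (P.natDegree - 1 + x.natDegree)) heq
    simp only [coeff_sub, coeff_zero] at hc
    rw [coeff_eq_zero_of_natDegree_lt (p := derivative P) (by omega),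
      coeff_mul_add_eq_of_natDegree_le (by omega : a.natDegree ≤ P.natDegree - 1) le_rfl,
      show P.natDegree - 1 + x.natDegree = (x.natDegree - 1) + P.natDegree by omega,
      coeff_mul_add_eq_of_natDegree_le (by omega : b.natDegree ≤ x.natDegree - 1) le_rfl, h] at hc
    have : a.coeff (P.natDegree - 1) * x.coeff x.natDegree = 0 := by linear_combination -hc
    rcases mul_eq_zero.1 this with h | h
    · exact h
    · exact absurd h (by simpa using hx0)
  have : Fact (Irreducible P) := ⟨hPi⟩
  have := hPm.finite_adjoinRoot
  have htr := trace_top8 P hPm a u had ha1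
  rw [htop] at htr
  obtain ⟨r, hr⟩ := add_hilbert90 _ htr
  obtain ⟨r, rfl⟩ := AdjoinRoot.mk_surjective r
  rw [← map_pow, ← map_sub, AdjoinRoot.mk_eq_mk] at hr
  obtain ⟨k, hk⟩ := hr
  exact ⟨r, w + x * k, by linear_combination x * hk - hwu⟩

end GoodPrime

end PartC1

section PartD1
open Polynomial

section EEBB
variable {p : ℕ} [hp : Fact p.Prime]

lemma frob_deriv8 (P : (ZMod p)[X]) : ∃ R : (ZMod p)[X],
    P ^ (p - 1) * derivative P = X ^ (p - 1) * (derivative P) ^ p + derivative R := by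
  obtain ⟨Q, rfl⟩ := Polynomial.map_surjective (Int.castRingHom (ZMod p)) (ZMod.intCast_surjective) P
  have h0 : (Q ^ p - expand ℤ p Q).map (Int.castRingHom (ZMod p)) = 0 := by
    rw [Polynomial.map_sub, Polynomial.map_pow, Polynomial.map_expand, ZMod.expand_card, sub_self]
  have h1 : C (p : ℤ) ∣ Q ^ p - expand ℤ p Q := by
    rw [Polynomial.C_dvd_iff_dvd_coeff]
    intro i
    have := congrArg (fun f => coeff f i) h0
    simp only [coeff_map, coeff_zero] at this
    exact (ZMod.intCast_zmod_eq_zero_iff_dvd _ p).1 this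
  obtain ⟨R, hR⟩ := h1
  have h2 : (p : ℤ[X]) * (Q ^ (p - 1) * derivative Q) =
      (p : ℤ[X]) * (X ^ (p - 1) * expand ℤ p (derivative Q) + derivative R) := by
    have := congrArg derivative hR
    rw [derivative_sub, derivative_pow, derivative_expand, derivative_C_mul] at this
    simp only [map_natCast] at this
    linear_combination this
  have h3 := mul_left_cancel₀ (by exact_mod_cast hp.out.ne_zero) h2
  refine ⟨R.map (Int.castRingHom (ZMod p)), ?_⟩
  have h4 := congrArg (Polynomial.map (Int.castRingHom (ZMod p))) h3
  simp only [Polynomial.map_mul, Polynomial.map_pow, Polynomial.map_add, Polynomial.map_X,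
    Polynomial.map_expand, ZMod.expand_card, ← derivative_map] at h4
  exact h4

variable {K : Type*} [Field K] [CharP K p]

/-- the span of pi^i K^p, 0 < i < p -/
def EE8 (p : ℕ) [Fact p.Prime] {K : Type*} [Field K] [CharP K p] (π : K) : AddSubgroup K where
  carrier := {y | ∃ w : ℕ → K, y = ∑ i ∈ Finset.Ico 1 p, π ^ i * w i ^ p}
  zero_mem' := ⟨fun _ => 0, by simp [(Fact.out : p.Prime).ne_zero]⟩
  add_mem' := by
    rintro _ _ ⟨w, rfl⟩ ⟨w', rfl⟩
    refine ⟨fun i => w i + w' i, ?_⟩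
    rw [← Finset.sum_add_distrib]
    exact Finset.sum_congr rfl (fun i _ => by rw [add_pow_char, mul_add])
  neg_mem' := by
    rintro _ ⟨w, rfl⟩
    refine ⟨fun i => - w i, ?_⟩
    rw [← Finset.sum_neg_distrib]
    refine Finset.sum_congr rfl (fun i _ => ?_)
    have : (- w i) ^ p = - (w i ^ p) := by
      rw [← zero_sub, sub_pow_char, zero_pow (Fact.out : p.Prime).ne_zero, zero_sub]
    rw [this]; ring

lemma EE8_smul {π y : K} (hy : y ∈ EE8 p π) (g : K) : g ^ p * y ∈ EE8 p π := by
  obtain ⟨w, rfl⟩ := hy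
  refine ⟨fun i => g * w i, ?_⟩
  rw [Finset.mul_sum]
  exact Finset.sum_congr rfl (fun i _ => by rw [mul_pow]; ring)

lemma EE8_pure {π : K} (g : K) (i : ℕ) (hi : 0 < i) (hip : i < p) : g ^ p * π ^ i ∈ EE8 p π := by
  apply EE8_smul
  refine ⟨fun j => if j = i then 1 else 0, ?_⟩
  rw [Finset.sum_eq_single i]
  · simp
  · intro j _ hj; simp [hj, hp.out.ne_zero]
  · intro h; exact absurd (Finset.mem_Ico.2 ⟨hi, hip⟩) h

/-- Artin-Schreier image plus EE -/
def BB8 (p : ℕ) [Fact p.Prime] {K : Type*} [Field K] [CharP K p] (π : K) : AddSubgroup K where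
  carrier := {y | ∃ u : K, ∃ e ∈ EE8 p π, y = u ^ p - u + e}
  zero_mem' := ⟨0, 0, zero_mem _, by simp [(Fact.out : p.Prime).ne_zero]⟩
  add_mem' := by
    rintro _ _ ⟨u, e, he, rfl⟩ ⟨u', e', he', rfl⟩
    exact ⟨u + u', e + e', add_mem he he', by rw [add_pow_char]; ring⟩
  neg_mem' := by
    rintro _ ⟨u, e, he, rfl⟩
    refine ⟨-u, -e, neg_mem he, ?_⟩
    have : (- u) ^ p = - (u ^ p) := by
      rw [← zero_sub, sub_pow_char, zero_pow (Fact.out : p.Prime).ne_zero, zero_sub]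
    rw [this]; ring

lemma EE8_le {π y : K} (h : y ∈ EE8 p π) : y ∈ BB8 p π :=
  ⟨0, y, h, by simp [hp.out.ne_zero]⟩

lemma AS8_mem {π : K} (u : K) : u ^ p - u ∈ BB8 p π := ⟨u, 0, zero_mem _, by simp⟩

/-- pairs (a, θ a) -/
def PP8 (p : ℕ) [Fact p.Prime] {K : Type*} [Field K] [CharP K p] (π : K) : AddSubgroup (K × K) where
  carrier := {y | ∃ f : ℕ → K, y.1 = ∑ i ∈ Finset.range p, π ^ i * f i ^ p ∧
    y.2 = ∑ i ∈ Finset.range p, (i : K) * (π ^ i * f i ^ p)}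
  zero_mem' := ⟨fun _ => 0, by simp [(Fact.out : p.Prime).ne_zero], by simp [(Fact.out : p.Prime).ne_zero]⟩
  add_mem' := by
    rintro _ _ ⟨w, h1, h2⟩ ⟨w', h1', h2'⟩
    refine ⟨fun i => w i + w' i, ?_, ?_⟩
    · rw [Prod.fst_add, h1, h1', ← Finset.sum_add_distrib]
      exact Finset.sum_congr rfl (fun i _ => by rw [add_pow_char, mul_add])
    · rw [Prod.snd_add, h2, h2', ← Finset.sum_add_distrib]
      exact Finset.sum_congr rfl (fun i _ => by rw [add_pow_char]; ring)
  neg_mem' := by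
    rintro _ ⟨w, h1, h2⟩
    have hneg : ∀ z : K, (- z) ^ p = - (z ^ p) := fun z => by
      rw [← zero_sub, sub_pow_char, zero_pow (Fact.out : p.Prime).ne_zero, zero_sub]
    refine ⟨fun i => - w i, ?_, ?_⟩
    · rw [Prod.fst_neg, h1, ← Finset.sum_neg_distrib]
      exact Finset.sum_congr rfl (fun i _ => by rw [hneg]; ring)
    · rw [Prod.snd_neg, h2, ← Finset.sum_neg_distrib]
      exact Finset.sum_congr rfl (fun i _ => by rw [hneg]; ring)

lemma PP8_pure {π : K} (g : K) (j : ℕ) : (g ^ p * π ^ j, (j : K) * (g ^ p * π ^ j)) ∈ PP8 p π := by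
  have hlt : j % p < p := Nat.mod_lt _ hp.out.pos
  have hj : (j : K) = ((j % p : ℕ) : K) := by
    conv_lhs => rw [← Nat.div_add_mod j p]
    push_cast
    rw [CharP.cast_eq_zero, zero_mul, zero_add]
  have e : g ^ p * π ^ j = π ^ (j % p) * (g * π ^ (j / p)) ^ p := by
    conv_lhs => rw [← Nat.div_add_mod j p]
    rw [mul_pow, pow_add, ← pow_mul, mul_comm p]; ring
  refine ⟨fun i => if i = j % p then g * π ^ (j / p) else 0, ?_, ?_⟩
  · rw [Finset.sum_eq_single (j % p)]
    · simpa using e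
    · intro i _ hi; simp [hi, hp.out.ne_zero]
    · intro h; exact absurd (Finset.mem_range.2 hlt) h
  · rw [Finset.sum_eq_single (j % p)]
    · simp only [if_true]; rw [hj, e]
    · intro i _ hi; simp [hi, hp.out.ne_zero]
    · intro h; exact absurd (Finset.mem_range.2 hlt) h

lemma PP8_snd {π a b : K} (h : (a, b) ∈ PP8 p π) : b ∈ EE8 p π := by
  obtain ⟨f, -, h2⟩ := h
  simp only at h2
  have hc : ∀ i : ℕ, (i : K) ^ p = i := fun i => by
    have := map_natCast (frobenius K p) i
    rwa [frobenius_def] at this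
  refine ⟨fun i => i * f i, ?_⟩
  rw [h2, Finset.range_eq_Ico, Finset.sum_eq_sum_Ico_succ_bot hp.out.pos]
  simp only [Nat.cast_zero, zero_mul, zero_add]
  exact Finset.sum_congr rfl (fun i _ => by rw [mul_pow, hc]; ring)

lemma PP8_step {π S a b : K} (h : (a, b) ∈ PP8 p π) :
    (a * (S ^ p - π), b * (S ^ p - π) - π * a) ∈ PP8 p π := by
  obtain ⟨f, h1, h2⟩ := h
  simp only at h1 h2
  have : (a * (S ^ p - π), b * (S ^ p - π) - π * a) = ∑ i ∈ Finset.range p,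
      (((f i * S) ^ p * π ^ i, (i : K) * ((f i * S) ^ p * π ^ i)) -
       ((f i) ^ p * π ^ (i + 1), ((i + 1 : ℕ) : K) * ((f i) ^ p * π ^ (i + 1)))) := by
    ext
    · simp only [Prod.fst_sum, Prod.fst_sub]
      rw [h1, Finset.sum_mul]
      exact Finset.sum_congr rfl (fun i _ => by rw [mul_pow]; ring)
    · simp only [Prod.snd_sum, Prod.snd_sub]
      rw [h1, h2, Finset.sum_mul, Finset.mul_sum, ← Finset.sum_sub_distrib]
      exact Finset.sum_congr rfl (fun i _ => by rw [mul_pow]; push_cast; ring)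
  rw [this]
  exact sum_mem (fun i _ => sub_mem (PP8_pure _ _) (PP8_pure _ _))

variable [Algebra (ZMod p) K]

lemma zmod_smul_mem8 {M : Type*} [AddCommGroup M] [Module (ZMod p) M] (H : AddSubgroup M) (c : ZMod p)
    {y : M} (hy : y ∈ H) : c • y ∈ H := by
  rw [show c = ((c.val : ℕ) : ZMod p) by simp, Nat.cast_smul_eq_nsmul]
  exact nsmul_mem hy _

lemma PP8_poly {π S s : K} (hs : s = S ^ p - π) (f : (ZMod p)[X]) :
    (aeval s f, - π * aeval s (derivative f)) ∈ PP8 p π := by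
  have hX : ∀ n : ℕ, (s ^ n, - π * (n * s ^ (n - 1))) ∈ PP8 p π := by
    intro n
    induction n with
    | zero => simpa using PP8_pure (p := p) (π := π) 1 0
    | succ n ih =>
      have := PP8_step (S := S) ih
      rw [← hs] at this
      convert this using 2
      · exact pow_succ s n
      · rcases n with _ | n
        · simp
        · rw [Nat.add_sub_cancel, Nat.add_sub_cancel]; push_cast; ring
  induction f using Polynomial.induction_on' with
  | add f g hf hg =>
    convert add_mem hf hg using 1
    ext <;> simp [mul_add]
  | monomial n c =>
    convert zmod_smul_mem8 _ c (hX n) using 1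
    ext
    · simp [Algebra.smul_def]
    · simp [derivative_monomial, Algebra.smul_def]; ring

lemma EE8_deriv {π S s : K} (hs : s = S ^ p - π) (f : (ZMod p)[X]) :
    π * aeval s (derivative f) ∈ EE8 p π := by
  have := neg_mem (PP8_snd (PP8_poly hs f))
  simpa using this

lemma EE8_top {π S s : K} (hs : s = S ^ p - π) (hs0 : s ≠ 0) :
    π * s ^ (p - 1) - π ^ p ∈ EE8 p π := by
  obtain ⟨q, hq⟩ : ∃ q, p = q + 1 := ⟨p - 1, by have := hp.out.pos; omega⟩
  have h1 : s ^ (p - 1) = ∑ i ∈ Finset.range p, (S ^ p) ^ i * π ^ (p - 1 - i) := by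
    apply mul_right_cancel₀ hs0
    rw [← pow_succ, Nat.sub_add_cancel hp.out.one_le]
    conv_lhs => rw [hs, sub_pow_char]
    conv_rhs => rw [hs]
    rw [geom_sum₂_mul]
  have h2 : π * s ^ (p - 1) - π ^ p = ∑ i ∈ Finset.Ico 1 p, (S ^ i) ^ p * π ^ (p - i) := by
    rw [h1, Finset.range_eq_Ico, Finset.sum_eq_sum_Ico_succ_bot hp.out.pos, mul_add, Finset.mul_sum]
    have e1 : π * ((S ^ p) ^ 0 * π ^ (p - 1 - 0)) = π ^ p := by
      rw [pow_zero, one_mul, Nat.sub_zero, ← pow_succ', Nat.sub_add_cancel hp.out.one_le]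
    rw [e1, add_sub_cancel_left]
    refine Finset.sum_congr rfl (fun i hi => ?_)
    have hi' := Finset.mem_Ico.1 hi
    rw [show p - i = (p - 1 - i) + 1 by omega, pow_succ π, ← pow_mul, ← pow_mul, mul_comm p]
    ring
  rw [h2]
  refine sum_mem (fun i hi => ?_)
  have hi' := Finset.mem_Ico.1 hi
  exact EE8_pure _ _ (by omega) (by omega)

lemma BB8_poly {π S s : K} (hs : s = S ^ p - π) (hs0 : s ≠ 0) (h : (ZMod p)[X]) :
    π * aeval s h ∈ BB8 p π := by
  have hX : ∀ n : ℕ, π * s ^ n ∈ BB8 p π := by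
    intro n
    induction n using Nat.strong_induction_on with
    | _ n ih =>
      by_cases hn : ((n + 1 : ℕ) : ZMod p) = 0
      · obtain ⟨j, hj⟩ := (ZMod.natCast_eq_zero_iff _ _).1 hn
        obtain ⟨m, rfl⟩ : ∃ m, j = m + 1 := ⟨j - 1, by
          rcases j with _ | j
          · omega
          · omega⟩
        have hnm : n = p * m + (p - 1) := by
          have := hp.out.one_le
          rw [mul_add] at hj; omega
        have hmn : m < n := by
          have := hp.out.two_le
          have : 2 * m ≤ p * m := Nat.mul_le_mul_right _ this
          omega
        have h1 := EE8_le (EE8_smul (EE8_top hs hs0) (s ^ m))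
        have h2 := AS8_mem (p := p) (π := π) (π * s ^ m)
        have h3 := add_mem (add_mem h1 h2) (ih m hmn)
        convert h3 using 1
        rw [hnm, mul_pow, pow_add, pow_mul']; ring
      · have := EE8_le (EE8_deriv hs (C (((n + 1 : ℕ) : ZMod p)⁻¹) * X ^ (n + 1)))
        convert this using 2
        rw [derivative_C_mul, derivative_X_pow, ← mul_assoc, ← C_mul, inv_mul_cancel₀ hn]
        simp
  induction h using Polynomial.induction_on' with
  | add f g hf hg => rw [map_add, mul_add]; exact add_mem hf hg
  | monomial n c =>
    convert zmod_smul_mem8 _ c (hX n) using 1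
    simp [Algebra.smul_def]; ring

lemma BB8_E {π S s : K} (hs : s = S ^ p - π) (hs0 : s ≠ 0) (P : (ZMod p)[X]) (hP : aeval s P ≠ 0)
    (r : K) : (r ^ p - r) * (π * aeval s (derivative P) / aeval s P) ∈ BB8 p π := by
  set E := π * aeval s (derivative P) / aeval s P with hE
  have key : E - E ^ p ∈ EE8 p π := by
    obtain ⟨R, hR⟩ := frob_deriv8 P
    have hR' := congrArg (aeval s) hR
    simp only [map_mul, map_pow, map_add, aeval_X] at hR'
    have h1 := EE8_smul (EE8_top hs hs0) (aeval s (derivative P) / aeval s P)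
    have h2 := EE8_smul (EE8_deriv hs R) (1 / aeval s P)
    convert add_mem h1 h2 using 1
    have hPp : aeval s P ^ (p - 1) * aeval s P = aeval s P ^ p := by
      rw [← pow_succ, Nat.sub_add_cancel hp.out.one_le]
    have hE1 : E = π * (aeval s P ^ (p - 1) * aeval s (derivative P)) / aeval s P ^ p := by
      rw [hE, ← hPp]; field_simp
    have hE2 : E ^ p = (aeval s (derivative P) / aeval s P) ^ p * π ^ p := by
      rw [hE, ← mul_pow]; congr 1; ring
    rw [hE2, hE1, hR', div_pow, div_pow]
    field_simp
    ring
  have h1 := EE8_le (EE8_smul key r)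
  have h2 := AS8_mem (p := p) (π := π) (r * E)
  convert add_mem h1 h2 using 1
  rw [mul_pow]; ring

/-- the diophantine condition -/
def W8 (p : ℕ) {K : Type*} [Field K] (π c x : K) : Prop :=
  ∃ (t : ℕ → K) (u : K) (w : ℕ → K), (∑ i ∈ Finset.range p, π ^ i * t i ^ p) ≠ 0 ∧
    ∑ i ∈ Finset.range p, (i : K) * (π ^ i * t i ^ p) =
      x * (∑ i ∈ Finset.range p, π ^ i * t i ^ p) *
        (c + u - u ^ p + ∑ i ∈ Finset.Ico 1 p, π ^ i * w i ^ p)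

end EEBB

end PartD1

section PartD2
open Polynomial

section WPoly
variable {p : ℕ} [hp : Fact p.Prime] {K : Type*} [Field K] [CharP K p] [Algebra (ZMod p) K]

lemma dl8_one (x : (ZMod p)[X]) : dl8 x 1 = 0 := by simp [dl8]

/-- t realizes the class h -/
def Gd8 (s π : K) (A x t h : (ZMod p)[X]) : Prop :=
  IsCoprime t x ∧ aeval s t ≠ 0 ∧
    aeval s (derivative t) / (aeval s A * aeval s t) - aeval s h / aeval s A ∈ BB8 p π

lemma Gd8_one (s π : K) (A x : (ZMod p)[X]) : Gd8 s π A x 1 0 :=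
  ⟨isCoprime_one_left, by simp, by simp⟩

lemma Gd8_mul {s π : K} {A x t h t' h' : (ZMod p)[X]} (h1 : Gd8 s π A x t h) (h2 : Gd8 s π A x t' h') :
    Gd8 s π A x (t * t') (h + h') := by
  refine ⟨h1.1.mul_left h2.1, by rw [map_mul]; exact mul_ne_zero h1.2.1 h2.2.1, ?_⟩
  convert add_mem h1.2.2 h2.2.2 using 1
  have e1 := h1.2.1
  have e2 := h2.2.1
  rw [derivative_mul, map_add, map_add, map_mul, map_mul, map_mul]
  field_simp
  ring

lemma Gd8_prime {s S π : K} (hs : s = S ^ p - π) (hs0 : s ≠ 0) (hinj : Function.Injective (aeval (R := ZMod p) s))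
    (piP A : (ZMod p)[X]) (hpi : aeval s piP = π) (hA : A ≠ 0) (P r : (ZMod p)[X])
    (hPx : IsCoprime P (piP * A)) (hP0 : P ≠ 0) (hr : P ∣ 1 - (piP * A) * (r ^ p - r)) :
    ∃ h, Gd8 s π A (piP * A) P h ∧ Ideal.Quotient.mk _ h = dl8 (piP * A) P := by
  obtain ⟨k, hk⟩ := hr
  have hne : ∀ f : (ZMod p)[X], f ≠ 0 → aeval s f ≠ 0 := fun f hf h =>
    hf (hinj (by rw [h, map_zero]))
  refine ⟨derivative P * k, ⟨hPx, hne _ hP0, ?_⟩, ?_⟩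
  · have h1 := BB8_E hs hs0 P (hne _ hP0) (aeval s r)
    convert h1 using 1
    have hk' := congrArg (aeval s) hk
    simp only [map_sub, map_mul, map_pow, map_one, hpi] at hk'
    have e1 := hne _ hP0
    have e2 := hne _ hA
    rw [map_mul]
    field_simp
    linear_combination (aeval s (derivative P)) * hk'
  · unfold dl8
    rw [map_mul]
    congr 1
    have h1 : Ideal.Quotient.mk (Ideal.span {piP * A}) P * Ideal.Quotient.mk (Ideal.span {piP * A}) k = 1 := by
      rw [← map_mul, ← map_one (Ideal.Quotient.mk _), Ideal.Quotient.eq, Ideal.mem_span_singleton]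
      exact ⟨- (r ^ p - r), by linear_combination -hk⟩
    have h2 := Ring.mul_inverse_cancel _ (isUnit_mk8.2 hPx)
    linear_combination (Ring.inverse (Ideal.Quotient.mk (Ideal.span {piP * A}) P)) * h1 -
      (Ideal.Quotient.mk (Ideal.span {piP * A}) k) * h2

theorem W8_poly {s : K} (Q : ℕ) (hQ : p ∣ Q) (hQ3 : 3 ≤ Q) 
    (hinj : Function.Injective (aeval (R := ZMod p) s)) (A : (ZMod p)[X])
    (hA : IsCoprime A (X ^ Q - X)) :
    W8 p (s ^ Q - s) s ((s ^ Q - s) * aeval s A) := by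
  obtain ⟨Q', rfl⟩ := hQ
  set π := s ^ (p * Q') - s with hπ
  set S := s ^ Q' with hS
  set piP : (ZMod p)[X] := X ^ (p * Q') - X with hpiP
  have hpi : aeval s piP = π := by simp [hpiP, hπ]
  have hs : s = S ^ p - π := by rw [hS, hπ, ← pow_mul, mul_comm Q']; ring
  have hne : ∀ f : (ZMod p)[X], f ≠ 0 → aeval s f ≠ 0 := fun f hf h =>
    hf (hinj (by rw [h, map_zero]))
  have hs0 : s ≠ 0 := by simpa using hne X X_ne_zero
  have hpideg : piP.natDegree = p * Q' := by
    rw [hpiP, natDegree_sub_eq_left_of_natDegree_lt]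
    · simp
    · simp; omega
  have hpi0 : piP ≠ 0 := by rintro h; rw [h, natDegree_zero] at hpideg; omega
  have hA0 : A ≠ 0 := by
    rintro rfl
    have := isCoprime_zero_left.1 hA
    have := natDegree_eq_zero_of_isUnit this
    omega
  have hpid : derivative piP = -1 := by
    rw [hpiP, derivative_sub, derivative_X_pow]
    simp
  set x := piP * A with hx
  have hxdeg : x.natDegree = p * Q' + A.natDegree := by
    rw [hx, natDegree_mul hpi0 hA0, hpideg]
  -- the target class
  obtain ⟨e, f, hef⟩ := hA
  set a : (ZMod p)[X] := 1 + x * (A * (e * X)) with ha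
  have hax : IsCoprime a x := ⟨1, - (A * (e * X)), by rw [ha]; ring⟩
  have hda : dl8 x a = Ideal.Quotient.mk _ (- (X * A)) := by
    have h1 : Ideal.Quotient.mk (Ideal.span {x}) a = 1 := by
      rw [← map_one (Ideal.Quotient.mk _), Ideal.Quotient.eq, Ideal.mem_span_singleton]
      exact ⟨A * (e * X), by rw [ha]; ring⟩
    unfold dl8
    rw [h1, Ring.inverse_one, mul_one, Ideal.Quotient.eq, Ideal.mem_span_singleton, ha, derivative_add,
      derivative_mul, derivative_one, hx, derivative_mul, hpid]
    refine ⟨derivative A * (e * X) + derivative (A * (e * X)) + f * X, ?_⟩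
    linear_combination (- X * A) * hef
  have hlam : lam8 x (dl8 x a) = 0 := by
    rw [hda, lam8_mk]
    have hd : (-(X * A)).natDegree = 1 + A.natDegree := by
      rw [natDegree_neg, natDegree_mul X_ne_zero hA0, natDegree_X]
    have hlt : (-(X * A)).degree < x.degree := by
      apply degree_lt_degree
      omega
    rw [(mod_eq_self_iff (by rintro h; rw [h] at hxdeg; simp at hxdeg; omega)).2 hlt]
    exact coeff_eq_zero_of_natDegree_lt (by omega)
  have hspan := lemD8 x (by omega) (lam8 x) a hax hlam
  have hall : ∀ w ∈ Submodule.span (ZMod p) {w | ∃ P : (ZMod p)[X], P.Monic ∧ Irreducible P ∧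
      IsCoprime P x ∧ lam8 x (dl8 x P) = 0 ∧ w = dl8 x P},
      ∃ t h, Gd8 s π A x t h ∧ Ideal.Quotient.mk (Ideal.span {x}) h = w := by
    intro w hw
    induction hw using Submodule.span_induction with
    | mem w hw =>
      obtain ⟨P, hPm, hPi, hPx, hPl, rfl⟩ := hw
      obtain ⟨r, hr⟩ := good8 x P (by omega) hPm hPi hPx hPl
      obtain ⟨h, h1, h2⟩ := Gd8_prime hs hs0 hinj piP A hpi hA0 P r hPx hPm.ne_zero hr
      exact ⟨P, h, h1, h2⟩
    | zero => exact ⟨1, 0, Gd8_one _ _ _ _, map_zero _⟩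
    | add w w' _ _ h1 h2 =>
      obtain ⟨t, h, h1, rfl⟩ := h1
      obtain ⟨t', h', h2, rfl⟩ := h2
      exact ⟨t * t', h + h', Gd8_mul h1 h2, map_add _ _ _⟩
    | smul c w _ h1 =>
      obtain ⟨t, h, h1, rfl⟩ := h1
      have hn : ∀ n : ℕ, ∃ t' h', Gd8 s π A x t' h' ∧
          Ideal.Quotient.mk (Ideal.span {x}) h' = n • Ideal.Quotient.mk (Ideal.span {x}) h := by
        intro n
        induction n with
        | zero => exact ⟨1, 0, Gd8_one _ _ _ _, by simp⟩
        | succ n ih =>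
          obtain ⟨t', h', h2, h3⟩ := ih
          exact ⟨t' * t, h' + h, Gd8_mul h2 h1, by rw [map_add, h3, succ_nsmul]⟩
      rw [show c = ((c.val : ℕ) : ZMod p) by simp, Nat.cast_smul_eq_nsmul]
      exact hn _
  obtain ⟨t, h, ⟨-, ht0, htB⟩, hh⟩ := hall _ hspan
  rw [hda, Ideal.Quotient.eq, Ideal.mem_span_singleton] at hh
  obtain ⟨h₂, hh⟩ := hh
  have hA' := hne A hA0
  have hfin : aeval s (derivative t) / (aeval s A * aeval s t) + s ∈ BB8 p π := by
    have := add_mem htB (BB8_poly hs hs0 h₂)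
    convert this using 1
    have hh' := congrArg (aeval s) hh
    simp only [hx, map_sub, map_neg, map_mul, aeval_X, hpi] at hh'
    field_simp
    linear_combination (aeval s t) * hh'
  obtain ⟨u, e', he', hu⟩ := hfin
  obtain ⟨w, hw⟩ := neg_mem he'
  obtain ⟨tt, htt1, htt2⟩ := PP8_poly hs t
  simp only at htt1 htt2
  refine ⟨tt, u, w, by rw [← htt1]; exact ht0, ?_⟩
  rw [← htt1, ← htt2, ← hw]
  have : aeval s (derivative t) = (aeval s A * aeval s t) * (u ^ p - u + e' - s) := by
    field_simp at hu
    linear_combination hu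
  rw [this]; ring

end WPoly

end PartD2

section PartE1
open Polynomial

section Val
variable {K : Type*} [Field K] (V : AddValuation K (WithTop ℤ))

lemma V8_lift {x : K} (hx : x ≠ 0) : ∃ n : ℤ, V x = (n : WithTop ℤ) := by
  have : V x ≠ ⊤ := fun h => hx ((AddValuation.top_iff V).1 h)
  exact ⟨(V x).untop this, (WithTop.coe_untop _ _).symm⟩

lemma V8_add_lt {x y : K} (h : V x < V y) : V (x + y) = V x := by
  exact AddValuation.map_add_eq_of_lt_left V h

lemma V8_add_lt' {x y : K} (h : V y < V x) : V (x + y) = V y := by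
  exact AddValuation.map_add_eq_of_lt_right V h

lemma V8_natCast (n : ℕ) : 0 ≤ V (n : K) := by
  induction n with
  | zero => simp
  | succ n ih =>
    rw [Nat.cast_succ]
    refine (le_min ih ?_).trans (AddValuation.map_add V _ _)
    simp

lemma V8_sum_min (s : Finset ℕ) (y : ℕ → K)
    (hd : ∀ i ∈ s, ∀ j ∈ s, i ≠ j → y i ≠ 0 → V (y i) ≠ V (y j)) :
    (∀ j ∈ s, V (∑ i ∈ s, y i) ≤ V (y j)) ∧
    (∑ i ∈ s, y i = 0 ∨ ∃ j ∈ s, y j ≠ 0 ∧ V (∑ i ∈ s, y i) = V (y j)) := by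
  classical
  induction s using Finset.induction_on with
  | empty => simp
  | insert a s ha ih =>
    obtain ⟨ih1, ih2⟩ := ih (fun i hi j hj => hd i (Finset.mem_insert_of_mem hi) j (Finset.mem_insert_of_mem hj))
    rw [Finset.sum_insert ha]
    set T := ∑ i ∈ s, y i with hT
    by_cases hya : y a = 0
    · rw [hya, zero_add]
      refine ⟨fun j hj => ?_, ?_⟩
      · rcases Finset.mem_insert.1 hj with rfl | hj
        · rw [hya]; simp
        · exact ih1 j hj
      · rcases ih2 with h | ⟨j, hj, h⟩
        · exact Or.inl h
        · exact Or.inr ⟨j, Finset.mem_insert_of_mem hj, h⟩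
    rcases ih2 with h | ⟨j, hj, hj0, h⟩
    · rw [h, add_zero]
      refine ⟨fun j hj => ?_, Or.inr ⟨a, Finset.mem_insert_self _ _, hya, rfl⟩⟩
      rcases Finset.mem_insert.1 hj with rfl | hj
      · exact le_rfl
      · have := ih1 j hj
        rw [h] at this
        exact le_trans (by simp) this
    · have hne : V (y a) ≠ V T := by
        rw [h]
        refine hd a (Finset.mem_insert_self _ _) j (Finset.mem_insert_of_mem hj) ?_ hya
        rintro rfl; exact ha hj
      rcases lt_or_gt_of_ne hne with hlt | hlt
      · rw [V8_add_lt V hlt]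
        refine ⟨fun i hi => ?_, Or.inr ⟨a, Finset.mem_insert_self _ _, hya, rfl⟩⟩
        rcases Finset.mem_insert.1 hi with rfl | hi
        · exact le_rfl
        · exact hlt.le.trans (ih1 i hi)
      · rw [V8_add_lt' V hlt]
        refine ⟨fun i hi => ?_, Or.inr ⟨j, Finset.mem_insert_of_mem hj, hj0, h⟩⟩
        rcases Finset.mem_insert.1 hi with rfl | hi
        · exact hlt.le
        · exact ih1 i hi

lemma V8_pure {p : ℕ} {π : K} (hπ : V π = 1) (i : ℕ) {w : K} {n : ℤ} (hw : V w = (n : WithTop ℤ)) :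
    V (π ^ i * w ^ p) = ((i + p * n : ℤ) : WithTop ℤ) := by
  rw [AddValuation.map_mul, AddValuation.map_pow, AddValuation.map_pow, hπ, hw, WithTop.coe_add]
  congr 1
  · simp

lemma V8_dist {p : ℕ} [hp : Fact p.Prime] {π : K} (hπ : V π = 1) (w : ℕ → K) (i j : ℕ) (hi : i < p) (hj : j < p)
    (hij : i ≠ j) (h0 : π ^ i * w i ^ p ≠ 0) : V (π ^ i * w i ^ p) ≠ V (π ^ j * w j ^ p) := by
  intro h
  have hwi : w i ≠ 0 := fun h => h0 (by simp [h, hp.out.ne_zero])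
  have hwj : w j ≠ 0 := by
    intro hj0
    rw [hj0, zero_pow hp.out.ne_zero, mul_zero, AddValuation.map_zero, AddValuation.top_iff] at h
    exact h0 h
  obtain ⟨n, hn⟩ := V8_lift V hwi
  obtain ⟨m, hm⟩ := V8_lift V hwj
  rw [V8_pure V hπ i hn, V8_pure V hπ j hm, WithTop.coe_inj] at h
  have h2 := congrArg (· % (p : ℤ)) h
  simp only [Int.add_mul_emod_self_left] at h2
  rw [Int.emod_eq_of_lt (by positivity) (by exact_mod_cast hi),
    Int.emod_eq_of_lt (by positivity) (by exact_mod_cast hj)] at h2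
  exact hij (by exact_mod_cast h2)

theorem V8_W {p : ℕ} [hp : Fact p.Prime] {π c x : K} (hπ : V π = 1) (hc : 0 ≤ V c)
    (hcn : ∀ u, 0 ≤ V u → ¬ 0 < V (c + u - u ^ p)) (h : W8 p π c x) : 0 ≤ V x := by
  obtain ⟨t, u, w, ht, h⟩ := h
  set T := ∑ i ∈ Finset.range p, π ^ i * t i ^ p with hT
  set e := ∑ i ∈ Finset.Ico 1 p, π ^ i * w i ^ p with he
  have hdt := (V8_sum_min V (Finset.range p) (fun i => π ^ i * t i ^ p)
    (fun i hi j hj hij h0 => V8_dist V hπ t i j (Finset.mem_range.1 hi) (Finset.mem_range.1 hj) hij h0)).1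
  have hde := (V8_sum_min V (Finset.Ico 1 p) (fun i => π ^ i * w i ^ p)
    (fun i hi j hj hij h0 => V8_dist V hπ w i j (Finset.mem_Ico.1 hi).2 (Finset.mem_Ico.1 hj).2 hij h0)).2
  rw [← hT] at hdt
  rw [← he] at hde
  have hθ : V T ≤ V (∑ i ∈ Finset.range p, (i : K) * (π ^ i * t i ^ p)) := by
    apply AddValuation.map_le_sum
    intro i hi
    rw [AddValuation.map_mul]
    refine (hdt i hi).trans ?_
    exact le_add_of_nonneg_left (V8_natCast V i)
  -- the valuation of the base
  have hB : ∃ n : ℤ, n ≤ 0 ∧ V (c + u - u ^ p) = ((p * n : ℤ) : WithTop ℤ) := by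
    rcases le_or_gt 0 (V u) with hu | hu
    · refine ⟨0, le_rfl, ?_⟩
      have h1 : 0 ≤ V (c + u - u ^ p) := by
        refine (le_min ?_ ?_).trans (AddValuation.map_sub V _ _)
        · exact (le_min hc hu).trans (AddValuation.map_add V _ _)
        · rw [AddValuation.map_pow]; exact nsmul_nonneg hu p
      simpa using le_antisymm (not_lt.1 (hcn u hu)) h1
    · have hu0 : u ≠ 0 := by rintro rfl; simp at hu
      obtain ⟨n, hn⟩ := V8_lift V hu0
      rw [hn] at hu
      have hn0 : n < 0 := by exact_mod_cast hu
      refine ⟨n, hn0.le, ?_⟩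
      have hup : V (u ^ p) = ((p * n : ℤ) : WithTop ℤ) := by
        have := V8_pure V hπ (p := p) 0 hn
        simpa using this
      have h1 : V (c + u) = (n : WithTop ℤ) := by
        rw [← hn]; apply V8_add_lt'
        rw [hn]; exact lt_of_lt_of_le hu hc
      have hlt : V (- (u ^ p)) < V (c + u) := by
        rw [AddValuation.map_neg, hup, h1, WithTop.coe_lt_coe]
        have := hp.out.two_le
        have : (2 : ℤ) ≤ p := by exact_mod_cast this
        nlinarith
      rw [sub_eq_add_neg, V8_add_lt' V hlt, AddValuation.map_neg, hup]
  obtain ⟨n, hn0, hn⟩ := hB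
  have hpn : (p : ℤ) * n ≤ 0 := mul_nonpos_of_nonneg_of_nonpos (by positivity) hn0
  have hD : V (c + u - u ^ p + e) ≤ 0 := by
    have hB0 : V (c + u - u ^ p) ≤ 0 := by rw [hn]; exact_mod_cast hpn
    rcases hde with h0 | ⟨j, hj, hj0, hje⟩
    · rw [h0, add_zero]; exact hB0
    · have hwj : w j ≠ 0 := fun h => hj0 (by simp [h, hp.out.ne_zero])
      obtain ⟨m, hm⟩ := V8_lift V hwj
      rw [V8_pure V hπ j hm] at hje
      have hne : V (c + u - u ^ p) ≠ V e := by
        rw [hn, hje]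
        intro h
        rw [WithTop.coe_inj] at h
        have h2 := congrArg (· % (p : ℤ)) h
        simp only [Int.add_mul_emod_self_left, Int.mul_emod_right] at h2
        have hj' := Finset.mem_Ico.1 hj
        rw [Int.emod_eq_of_lt (by positivity) (by exact_mod_cast hj'.2)] at h2
        omega
      rcases lt_or_gt_of_ne hne with hlt | hlt
      · rw [V8_add_lt V hlt]; exact hB0
      · rw [V8_add_lt' V hlt]; exact hlt.le.trans hB0
  by_contra hx
  rw [not_le] at hx
  have hx0 : x ≠ 0 := by rintro rfl; simp at hx
  have hD0 : c + u - u ^ p + e ≠ 0 := by intro h; rw [h] at hD; simp at hD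
  obtain ⟨a, ha⟩ := V8_lift V hx0
  obtain ⟨b, hb⟩ := V8_lift V ht
  obtain ⟨d, hd⟩ := V8_lift V hD0
  rw [h, AddValuation.map_mul, AddValuation.map_mul, ha, hb, hd] at hθ
  rw [ha] at hx
  rw [hd] at hD
  have e1 : a < 0 := by exact_mod_cast hx
  have e2 : d ≤ 0 := by exact_mod_cast hD
  have e3 : b ≤ a + b + d := by exact_mod_cast hθ
  omega

end Val

end PartE1

section PartF1
open Polynomial
section
lemma trdeg8 (p : ℕ) [Fact p.Prime] (K : Type) [Field K] [Algebra (ZMod p) K] [Algebra (RatFunc (ZMod p)) K]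
    [FiniteDimensional (RatFunc (ZMod p)) K] : Algebra.trdeg (ZMod p) K = 1 := by
  have : IsScalarTower (ZMod p) (RatFunc (ZMod p)) K :=
    IsScalarTower.of_algebraMap_eq' (Subsingleton.elim _ _)
  have h1 := trdeg_add_eq (ZMod p) (RatFunc (ZMod p)) (A := K)
  have h2 := trdeg_add_eq (ZMod p) (ZMod p)[X] (A := RatFunc (ZMod p))
  have : Algebra.IsAlgebraic (ZMod p)[X] (RatFunc (ZMod p)) := (IsFractionRing.comap_isAlgebraic_iff (K := RatFunc (ZMod p))).2 inferInstance
  rw [trdeg_eq_zero (R := (ZMod p)[X]), add_zero, Polynomial.trdeg_of_isDomain] at h2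
  rw [trdeg_eq_zero (R := RatFunc (ZMod p)), add_zero, ← h2] at h1
  exact h1.symm

lemma essft8 (p : ℕ) [Fact p.Prime] (K : Type) [Field K] [Algebra (ZMod p) K] [Algebra (RatFunc (ZMod p)) K]
    [FiniteDimensional (RatFunc (ZMod p)) K] : Algebra.EssFiniteType (ZMod p) K := by
  have : IsScalarTower (ZMod p) (RatFunc (ZMod p)) K :=
    IsScalarTower.of_algebraMap_eq' (Subsingleton.elim _ _)
  have h1 : Algebra.EssFiniteType (ZMod p)[X] (RatFunc (ZMod p)) :=
    Algebra.EssFiniteType.of_isLocalization _ (nonZeroDivisors (ZMod p)[X])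
  have h2 : Algebra.EssFiniteType (ZMod p) (RatFunc (ZMod p)) :=
    Algebra.EssFiniteType.comp _ (ZMod p)[X] _
  exact Algebra.EssFiniteType.comp _ (RatFunc (ZMod p)) _

/-- finiteness over `F_p[τ]` -/
theorem lemG8 (p : ℕ) [Fact p.Prime] (K : Type) [Field K] [Algebra (ZMod p) K] [Algebra (RatFunc (ZMod p)) K]
    [FiniteDimensional (RatFunc (ZMod p)) K] (τ : K) (hinj : Function.Injective (aeval (R := ZMod p) τ)) :
    ∃ n : ℕ, 0 < n ∧ ∀ f : Fin (n+1) → K, ∃ a : Fin (n+1) → (ZMod p)[X], a ≠ 0 ∧ ∑ i, aeval τ (a i) * f i = 0 := by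
  let : Algebra (ZMod p)[X] K := (aeval (R := ZMod p) τ).toAlgebra
  have hmap : ∀ a : (ZMod p)[X], algebraMap (ZMod p)[X] K a = aeval τ a := fun a => rfl
  have : IsScalarTower (ZMod p) (ZMod p)[X] K :=
    IsScalarTower.of_algebraMap_eq' (Subsingleton.elim _ _)
  have : FaithfulSMul (ZMod p)[X] K := (faithfulSMul_iff_algebraMap_injective _ _).2 hinj
  have htb : IsTranscendenceBasis (ZMod p) (fun _ : Unit => τ) := by
    apply AlgebraicIndependent.isTranscendenceBasis_of_trdeg_le_of_finite
    · rw [algebraicIndependent_unique_type_iff]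
      exact transcendental_iff_injective.2 hinj
    · rw [trdeg8]; simp
  have halg : Algebra.IsAlgebraic (ZMod p)[X] K := by
    have h2 : Algebra.trdeg (ZMod p)[X] K = 0 := by
      have h1 := trdeg_add_eq (ZMod p) (ZMod p)[X] (A := K)
      rw [trdeg8, Polynomial.trdeg_of_isDomain] at h1
      exact Cardinal.eq_of_add_eq_add_left (b := Algebra.trdeg (ZMod p)[X] K) (c := 0)
        (a := 1) (by rw [h1, add_zero]) (by simp)
    exact trdeg_eq_zero_iff.1 h2
  let : Algebra (FractionRing (ZMod p)[X]) K := FractionRing.liftAlgebra _ _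
  have := FractionRing.isScalarTower_liftAlgebra (ZMod p)[X] K
  have : Algebra.IsAlgebraic (FractionRing (ZMod p)[X]) K :=
    IsFractionRing.comap_isAlgebraic_iff (A := (ZMod p)[X]).1 halg
  have := essft8 p K
  have : Algebra.EssFiniteType (ZMod p)[X] K := Algebra.EssFiniteType.of_comp (ZMod p) _ _
  have : Algebra.EssFiniteType (FractionRing (ZMod p)[X]) K := Algebra.EssFiniteType.of_comp (ZMod p)[X] _ _
  have : FiniteDimensional (FractionRing (ZMod p)[X]) K := by
    obtain ⟨S, hS⟩ := IntermediateField.fg_top (FractionRing (ZMod p)[X]) K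
    have h1 : FiniteDimensional (FractionRing (ZMod p)[X]) (IntermediateField.adjoin (FractionRing (ZMod p)[X]) (S : Set K)) :=
      IntermediateField.finiteDimensional_adjoin
        (fun x _ => (Algebra.IsAlgebraic.isAlgebraic x).isIntegral)
    rw [hS] at h1
    exact IntermediateField.topEquiv.toLinearEquiv.finiteDimensional
  refine ⟨Module.finrank (FractionRing (ZMod p)[X]) K, Module.finrank_pos, fun f => ?_⟩
  have hnl : ¬ LinearIndependent (FractionRing (ZMod p)[X]) f := by
    intro h
    have := h.fintype_card_le_finrank
    simp at this
  rw [← LinearIndependent.iff_fractionRing (R := (ZMod p)[X])] at hnl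
  rw [Fintype.not_linearIndependent_iff] at hnl
  obtain ⟨g, hg, i, hi⟩ := hnl
  refine ⟨g, fun h => hi (by rw [h]; rfl), ?_⟩
  rw [← hg]
  exact Finset.sum_congr rfl fun i _ => by rw [Algebra.smul_def, hmap]
end

end PartF1

section PartF2
open Polynomial
section
variable {p : ℕ} [Fact p.Prime] {K : Type} [Field K] [Algebra (ZMod p) K]

/-- bounded rank over `F_p[s]` -/
def Rk8 (p : ℕ) [Fact p.Prime] {K : Type} [Field K] [Algebra (ZMod p) K] (s : K) (n : ℕ) : Prop :=
  ∀ f : Fin (n+1) → K, ∃ a : Fin (n+1) → (ZMod p)[X], a ≠ 0 ∧ ∑ i, aeval s (a i) * f i = 0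

lemma prim8 {s : K} (hinj : Function.Injective (aeval (R := ZMod p) s)) {n : ℕ} (hn : Rk8 p s n)
    {P : (ZMod p)[X]} (hP : Irreducible P) (f : Fin (n+1) → K) :
    ∃ a : Fin (n+1) → (ZMod p)[X], (∃ i, ¬ P ∣ a i) ∧ ∑ i, aeval s (a i) * f i = 0 := by
  obtain ⟨a, ha, h⟩ := hn f
  let : NormalizedGCDMonoid (ZMod p)[X] := Nonempty.some inferInstance
  obtain ⟨g, hg, h1⟩ := Finset.extract_gcd (s := Finset.univ) a Finset.univ_nonempty
  refine ⟨g, ?_, ?_⟩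
  · by_contra hcon
    push Not at hcon
    have := Finset.dvd_gcd (s := Finset.univ) (f := g) (a := P) (fun i _ => hcon i)
    rw [h1] at this
    exact hP.not_isUnit (isUnit_of_dvd_one this)
  · have hd : Finset.univ.gcd a ≠ 0 := by
      intro h0
      apply ha
      funext i
      exact Finset.gcd_eq_zero_iff.1 h0 i (Finset.mem_univ _)
    have hd' : aeval s (Finset.univ.gcd a) ≠ 0 := fun h0 => hd (hinj (by rw [h0, map_zero]))
    have h2 : aeval s (Finset.univ.gcd a) * ∑ i, aeval s (g i) * f i = 0 := by
      rw [← h, Finset.mul_sum]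
      refine Finset.sum_congr rfl fun i _ => ?_
      conv_rhs => rw [hg i (Finset.mem_univ _)]
      rw [map_mul, mul_assoc]
    exact (mul_eq_zero.1 h2).resolve_left hd'

theorem lemF8 {s : K} (hinj : Function.Injective (aeval (R := ZMod p) s)) {n : ℕ} (hn : Rk8 p s n)
    {P : (ZMod p)[X]} (hP : Irreducible P) (O : Subalgebra (ZMod p) K) (hs : s ∈ O)
    {R : Type} [CommRing R] (φ : O →+* R) (hφ : Function.Surjective φ)
    (h0 : φ (aeval (⟨s, hs⟩ : O) P) = 0) : Finite R := by
  let ψ : (ZMod p)[X] →+* R := φ.comp (aeval (R := ZMod p) (⟨s, hs⟩ : O)).toRingHom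
  have hψ : ∀ a, ψ a = φ (aeval (⟨s, hs⟩ : O) a) := fun a => rfl
  have : Fact (Irreducible P) := ⟨hP⟩
  let lft : AdjoinRoot P →+* R := Ideal.Quotient.lift (Ideal.span {P}) ψ (by
    intro a ha
    obtain ⟨b, rfl⟩ := Ideal.mem_span_singleton'.1 ha
    rw [map_mul, hψ P, h0, mul_zero])
  have hl : ∀ a, lft (AdjoinRoot.mk P a) = ψ a := fun a => Ideal.Quotient.lift_mk _ _ _
  let : Algebra (AdjoinRoot P) R := lft.toAlgebra
  have hmap : ∀ x, algebraMap (AdjoinRoot P) R x = lft x := fun a => rfl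
  have hfin : Finite (AdjoinRoot P) := by
    have := (AdjoinRoot.powerBasis hP.ne_zero).finite
    exact Module.finite_of_finite (ZMod p)
  have hrk : Module.rank (AdjoinRoot P) R ≤ n := by
    apply rank_le
    intro S hS
    by_contra hcard
    push Not at hcard
    have hli : ∃ f : Fin (n+1) → R, LinearIndependent (AdjoinRoot P) f := by
      have e : Fin (n+1) ↪ S := (Function.Embedding.nonempty_of_card_le (by simpa using hcard)).some
      exact ⟨_, hS.comp e e.injective⟩
    obtain ⟨f, hf⟩ := hli
    choose g hg using fun i => hφ (f i)
    obtain ⟨a, ⟨i, hi⟩, ha⟩ := prim8 hinj hn hP (fun i => (g i : K))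
    have h1 : ∑ i, aeval (⟨s, hs⟩ : O) (a i) * g i = 0 := by
      apply Subtype.ext
      push_cast
      rw [← ha]
    have h2 := congrArg φ h1
    rw [map_sum, map_zero] at h2
    have h3 := Fintype.linearIndependent_iff.1 hf (fun i => AdjoinRoot.mk P (a i)) (by
      rw [← h2]
      refine Finset.sum_congr rfl fun i _ => ?_
      rw [Algebra.smul_def, hmap, hl, hψ, map_mul, hg]) i
    exact hi (AdjoinRoot.mk_eq_zero.1 h3)
  have : Module.Finite (AdjoinRoot P) R := by
    rw [← Module.rank_lt_aleph0_iff]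
    exact lt_of_le_of_lt hrk (Cardinal.natCast_lt_aleph0)
  exact Module.finite_of_finite (AdjoinRoot P)
end

end PartF2

section PartF3
open Polynomial
section
variable {p : ℕ} [Fact p.Prime] {K : Type} [Field K] [Algebra (ZMod p) K] (V : AddValuation K (WithTop ℤ))

lemma V8_pow {x : K} {n : ℤ} (h : V x = (n : WithTop ℤ)) (i : ℕ) : V (x ^ i) = ((i * n : ℤ) : WithTop ℤ) := by
  rw [AddValuation.map_pow, h, ← WithTop.coe_nsmul]; simp

lemma V8_inv {x : K} {n : ℤ} (h : V x = (n : WithTop ℤ)) : V x⁻¹ = ((-n : ℤ) : WithTop ℤ) := by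
  have hx : x ≠ 0 := by rintro rfl; simp at h
  have h1 : V (x * x⁻¹) = 0 := by rw [mul_inv_cancel₀ hx]; simp
  obtain ⟨m, hm⟩ := V8_lift V (inv_ne_zero hx)
  rw [AddValuation.map_mul, h, hm, ← WithTop.coe_add] at h1
  rw [hm]
  have : n + m = 0 := by exact_mod_cast h1
  rw [show m = -n by lia]

lemma V8_pow_nonneg {x : K} {i : ℕ} (hi : i ≠ 0) (h : 0 ≤ V (x ^ i)) : 0 ≤ V x := by
  by_cases hx : x = 0
  · simp [hx]
  obtain ⟨n, hn⟩ := V8_lift V hx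
  rw [V8_pow V hn] at h
  rw [hn]
  have h' : (0 : ℤ) ≤ i * n := by exact_mod_cast h
  have : 0 ≤ n := nonneg_of_mul_nonneg_right h' (by positivity)
  exact_mod_cast this

lemma V8_zmod (a : ZMod p) : 0 ≤ V (algebraMap (ZMod p) K a) := by
  rw [← ZMod.natCast_zmod_val a, map_natCast]
  exact V8_natCast V _

/-- the valuation ring as a subalgebra -/
def O8 (p : ℕ) [Fact p.Prime] {K : Type} [Field K] [Algebra (ZMod p) K] (V : AddValuation K (WithTop ℤ)) :
    Subalgebra (ZMod p) K where
  carrier := {x | 0 ≤ V x}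
  mul_mem' := by
    intro a b ha hb
    simp only [Set.mem_ofPred_eq, AddValuation.map_mul] at *
    exact add_nonneg ha hb
  add_mem' := by
    intro a b ha hb
    exact AddValuation.map_le_add V ha hb
  algebraMap_mem' := V8_zmod V

lemma mem_O8 {x : K} : x ∈ O8 p V ↔ 0 ≤ V x := Iff.rfl

def M8 (p : ℕ) [Fact p.Prime] {K : Type} [Field K] [Algebra (ZMod p) K] (V : AddValuation K (WithTop ℤ)) :
    Ideal (O8 p V) where
  carrier := {x | 0 < V x}
  zero_mem' := by simp
  add_mem' := by
    intro a b ha hb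
    exact AddValuation.map_lt_add V ha hb
  smul_mem' := by
    intro c x hx
    simp only [Set.mem_ofPred_eq, smul_eq_mul, MulMemClass.coe_mul, AddValuation.map_mul] at *
    exact lt_of_lt_of_le hx (le_add_of_nonneg_left c.2)

lemma mem_M8 {x : O8 p V} : x ∈ M8 p V ↔ 0 < V (x : K) := Iff.rfl

lemma M8_max : (M8 p V).IsMaximal := by
  refine Ideal.isMaximal_iff.2 ⟨?_, ?_⟩
  · rw [mem_M8]; simp
  · intro J x hJ hx hxJ
    rw [mem_M8] at hx
    have h0 : V (x : K) = ((0 : ℤ) : WithTop ℤ) := le_antisymm (not_lt.1 hx) x.2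
    have h1 := V8_inv V h0
    have hx0 : (x : K) ≠ 0 := by
      intro h; rw [h] at h0; simp at h0
    have : (1 : O8 p V) = ⟨(x : K)⁻¹, by rw [mem_O8, h1]; simp⟩ * x := by
      apply Subtype.ext
      simp [hx0]
    rw [this]
    exact J.mul_mem_left _ hxJ

lemma aeval_O8 {s : K} (hs : 0 ≤ V s) (a : (ZMod p)[X]) : 0 ≤ V (aeval s a) := by
  have := (aeval (⟨s, (mem_O8 V).2 hs⟩ : O8 p V) a).2
  rw [Polynomial.aeval_subalgebra_coe] at this
  exact this

theorem genP8 {s : K} (hs : 0 ≤ V s) (hinj : Function.Injective (aeval (R := ZMod p) s)) {n : ℕ} (hn : Rk8 p s n)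
    (hx : ∃ x, V x = 1) : ∃ P : (ZMod p)[X], Irreducible P ∧ ∀ a : (ZMod p)[X], 0 < V (aeval s a) ↔ P ∣ a := by
  have hmax : (M8 p V).IsMaximal := M8_max V
  let J : Ideal (ZMod p)[X] := (M8 p V).comap (aeval (R := ZMod p) (⟨s, (mem_O8 V).2 hs⟩ : O8 p V))
  have hJ : ∀ a, a ∈ J ↔ 0 < V (aeval s a) := by
    intro a
    rw [Ideal.mem_comap, mem_M8, Polynomial.aeval_subalgebra_coe]
  have hJp : J.IsPrime := Ideal.IsPrime.comap _
  have hne : J ≠ ⊥ := by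
    intro hbot
    obtain ⟨x, hx⟩ := hx
    have hx' : V x = ((1 : ℤ) : WithTop ℤ) := hx
    have hx0 : x ≠ 0 := by rintro rfl; simp at hx
    obtain ⟨a, ha, h⟩ := hn (fun i => x ^ (i : ℕ))
    let y : ℕ → K := fun i => if h : i < n + 1 then aeval s (a ⟨i, h⟩) * x ^ i else 0
    have hy : ∀ i : Fin (n+1), y i = aeval s (a i) * x ^ (i : ℕ) := by
      intro i; exact dif_pos i.2
    have hVy : ∀ i < n + 1, y i ≠ 0 → V (y i) = ((i : ℤ) : WithTop ℤ) := by
      intro i hi h0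
      have h1 := hy ⟨i, hi⟩
      simp only at h1
      rw [h1] at h0 ⊢
      have h2 : ¬ 0 < V (aeval s (a ⟨i, hi⟩)) := by
        rw [← hJ, hbot]
        intro h3
        rw [Ideal.mem_bot] at h3
        rw [h3] at h0
        simp at h0
      rw [AddValuation.map_mul, le_antisymm (not_lt.1 h2) (aeval_O8 V hs _), V8_pow V hx']
      simp
    have hsum : ∑ i ∈ Finset.range (n+1), y i = 0 := by
      rw [← h, Finset.sum_range]
      exact Finset.sum_congr rfl fun i _ => hy i
    have h3 := (V8_sum_min V (Finset.range (n+1)) y (by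
      intro i hi j hj hij h0 heq
      rw [hVy i (Finset.mem_range.1 hi) h0] at heq
      by_cases hj0 : y j = 0
      · rw [hj0, AddValuation.map_zero] at heq
        exact WithTop.coe_ne_top heq
      · rw [hVy j (Finset.mem_range.1 hj) hj0] at heq
        apply hij
        exact_mod_cast heq)).1
    apply ha
    funext i
    have h4 := h3 i (Finset.mem_range.2 i.2)
    rw [hsum, AddValuation.map_zero, top_le_iff, AddValuation.top_iff, hy] at h4
    have h5 := (mul_eq_zero.1 h4).resolve_right (pow_ne_zero _ hx0)
    exact hinj (by rw [h5]; simp)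
  refine ⟨Submodule.IsPrincipal.generator J, (Submodule.IsPrincipal.prime_generator_of_isPrime J hne).irreducible, ?_⟩
  intro a
  rw [← hJ, Submodule.IsPrincipal.mem_iff_generator_dvd]

lemma kap8 {s : K} (hs : 0 ≤ V s) (hinj : Function.Injective (aeval (R := ZMod p) s)) {n : ℕ} (hn : Rk8 p s n)
    (hx : ∃ x, V x = 1) : Finite (O8 p V ⧸ M8 p V) := by
  obtain ⟨P, hP, h⟩ := genP8 V hs hinj hn hx
  refine lemF8 hinj hn hP (O8 p V) ((mem_O8 V).2 hs) (Ideal.Quotient.mk _) Ideal.Quotient.mk_surjective ?_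
  rw [Ideal.Quotient.eq_zero_iff_mem, mem_M8, Polynomial.aeval_subalgebra_coe, h]

lemma tinj8 [Algebra (RatFunc (ZMod p)) K] :
    Function.Injective (aeval (R := ZMod p) (algebraMap (RatFunc (ZMod p)) K RatFunc.X)) := by
  have : IsScalarTower (ZMod p) (RatFunc (ZMod p)) K :=
    IsScalarTower.of_algebraMap_eq' (Subsingleton.elim _ _)
  intro a b h
  rw [aeval_algebraMap_apply, aeval_algebraMap_apply] at h
  have h1 := (algebraMap (RatFunc (ZMod p)) K).injective h
  rw [← RatFunc.algebraMap_X, aeval_algebraMap_apply, aeval_algebraMap_apply, aeval_X_left_apply, aeval_X_left_apply] at h1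
  exact RatFunc.algebraMap_injective _ h1

lemma inj_inv8 {t : K} (h : Function.Injective (aeval (R := ZMod p) t)) :
    Function.Injective (aeval (R := ZMod p) t⁻¹) := by
  rw [← transcendental_iff_injective] at h ⊢
  exact fun h1 => h (by simpa using h1.inv)

theorem kapfin8 [Algebra (RatFunc (ZMod p)) K] [FiniteDimensional (RatFunc (ZMod p)) K]
    (hx : ∃ x, V x = 1) : Finite (O8 p V ⧸ M8 p V) := by
  have h1 := tinj8 (p := p) (K := K)
  set t := algebraMap (RatFunc (ZMod p)) K RatFunc.X
  rcases le_total 0 (V t) with h | h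
  · obtain ⟨n, _, hn⟩ := lemG8 p K t h1
    exact kap8 V h h1 hn hx
  · have h2 := inj_inv8 h1
    obtain ⟨n, _, hn⟩ := lemG8 p K t⁻¹ h2
    refine kap8 V ?_ h2 hn hx
    have ht0 : t ≠ 0 := by intro h0; rw [h0] at h; simp at h
    obtain ⟨m, hm⟩ := V8_lift V ht0
    rw [V8_inv V hm]
    rw [hm] at h
    have : m ≤ 0 := by exact_mod_cast h
    have : 0 ≤ - m := by lia
    exact_mod_cast this
end

end PartF3

section PartF4
open Polynomial
section
variable {p : ℕ} [Fact p.Prime] {K : Type} [Field K] [Algebra (ZMod p) K] (V : AddValuation K (WithTop ℤ))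

lemma trans8 {x : K} (hx : V x = 1) : Transcendental (ZMod p) x := by
  intro h
  have hi := h.isIntegral
  have : FiniteDimensional (ZMod p) (IntermediateField.adjoin (ZMod p) {x}) :=
    IntermediateField.adjoin.finiteDimensional hi
  have : Finite (IntermediateField.adjoin (ZMod p) {x}) := Module.finite_of_finite (ZMod p)
  let := Fintype.ofFinite (IntermediateField.adjoin (ZMod p) {x})
  have hx0 : x ≠ 0 := by rintro rfl; simp at hx
  have h1 := FiniteField.pow_card_sub_one_eq_one (IntermediateField.AdjoinSimple.gen (ZMod p) x) (by
    intro h0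
    apply hx0
    have := congrArg (algebraMap _ K) h0
    simpa using this)
  have h2 := congrArg (algebraMap _ K) h1
  rw [map_pow, IntermediateField.AdjoinSimple.algebraMap_gen, map_one] at h2
  have hx' : V x = ((1 : ℤ) : WithTop ℤ) := hx
  have h3 := V8_pow V hx' (Fintype.card (IntermediateField.adjoin (ZMod p) {x}) - 1)
  rw [h2, AddValuation.map_one] at h3
  have h4 : 1 < Fintype.card (IntermediateField.adjoin (ZMod p) {x}) := Fintype.one_lt_card
  have h5 : (0 : ℤ) = (Fintype.card (IntermediateField.adjoin (ZMod p) {x}) - 1 : ℕ) * 1 := by exact_mod_cast h3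
  lia

theorem choose8_aux {κ : Type} [Field κ] [Finite κ] (res : O8 p V →+* κ) (hsur : Function.Surjective res)
    (hres : ∀ x : O8 p V, res x = 0 ↔ 0 < V (x : K))
    (hx : ∃ x, V x = 1) : ∃ (Q c : ℕ) (s : K), p ∣ Q ∧ 3 ≤ Q ∧ 0 ≤ V s ∧ V (s ^ Q - s) = 1 ∧
      (∀ u, 0 ≤ V u → ¬ 0 < V (s + u - u ^ p)) ∧ Function.Injective (aeval (R := ZMod p) s) ∧ 0 < c ∧
      ∀ h, V h = 0 → 0 < V (1 - h ^ c) := by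
  have hp : p.Prime := Fact.out
  let := Fintype.ofFinite κ
  have hcK : CharP K p := charP_of_injective_algebraMap (algebraMap (ZMod p) K).injective p
  have hcκ : CharP κ p :=
    charP_of_injective_ringHom (res.comp (algebraMap (ZMod p) (O8 p V))).injective p
  obtain ⟨m, -, hm⟩ := FiniteField.card κ p
  set q := Fintype.card κ with hq
  have hq1 : 1 < q := Fintype.one_lt_card
  have hns : ∃ b : κ, ∀ a : κ, a ^ p - a ≠ b := by
    by_contra hcon
    push Not at hcon
    have hs : Function.Surjective (fun a : κ => a ^ p - a) := hcon
    have hi := Finite.injective_iff_surjective.2 hs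
    exact zero_ne_one (hi (a₁ := 0) (a₂ := 1) (by simp [hp.ne_zero]))
  obtain ⟨b, hb⟩ := hns
  obtain ⟨s0, hs0⟩ := hsur b
  have hcs : ∀ u : K, 0 ≤ V u → ¬ 0 < V ((s0 : K) + u - u ^ p) := by
    intro u hu hlt
    have := (hres (s0 + ⟨u, hu⟩ - ⟨u, hu⟩ ^ p)).2 (by simpa using hlt)
    rw [map_sub, map_add, map_pow, hs0] at this
    exact hb (res ⟨u, hu⟩) (by linear_combination -this)
  have hQ : q ^ 2 = p ^ (2 * (m : ℕ)) := by rw [hm, ← pow_mul, mul_comm]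
  have hπ0 : 0 < V ((s0 : K) ^ (q ^ 2) - s0) := by
    have := (hres (s0 ^ (q ^ 2) - s0)).1 (by
      rw [map_sub, map_pow, pow_two, pow_mul, FiniteField.pow_card, FiniteField.pow_card, sub_self])
    simpa using this
  have hpow : ∀ h, V h = 0 → 0 < V (1 - h ^ (q - 1)) := by
    intro h hh
    have := (hres (1 - (⟨h, hh.ge⟩ : O8 p V) ^ (q - 1))).1 (by
      rw [map_sub, map_pow, map_one, FiniteField.pow_card_sub_one_eq_one, sub_self]
      intro h0
      rw [hres] at h0
      exact absurd hh h0.ne')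
    simpa using this
  have hQ3 : 3 ≤ q ^ 2 := by nlinarith
  have hpQ : p ∣ q ^ 2 := by
    rw [hQ]; exact dvd_pow_self _ (mul_ne_zero two_ne_zero m.ne_zero)
  suffices h : ∃ s : K, 0 ≤ V s ∧ V (s ^ (q^2) - s) = 1 ∧
      (∀ u, 0 ≤ V u → ¬ 0 < V (s + u - u ^ p)) by
    obtain ⟨s, h1, h2, h3⟩ := h
    refine ⟨q ^ 2, q - 1, s, hpQ, hQ3, h1, h2, h3, ?_, by lia, hpow⟩
    rw [← transcendental_iff_injective]
    intro hs
    exact trans8 V h2 ((hs.pow _).sub hs)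
  by_cases h1 : V ((s0 : K) ^ (q ^ 2) - s0) = 1
  · exact ⟨s0, s0.2, h1, hcs⟩
  obtain ⟨u, hu⟩ := hx
  have hu' : V u = ((1 : ℤ) : WithTop ℤ) := hu
  have hu0 : 0 < V u := by rw [hu]; exact zero_lt_one
  refine ⟨s0 + u, AddValuation.map_le_add V s0.2 hu0.le, ?_, ?_⟩
  · have e1 : ((s0 : K) + u) ^ (q ^ 2) - (s0 + u) = (-u + u ^ (q ^ 2)) + ((s0 : K) ^ (q ^ 2) - s0) := by
      rw [hQ, add_pow_char_pow]; ring
    have e2 : V (-u + u ^ (q ^ 2)) = 1 := by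
      rw [V8_add_lt, AddValuation.map_neg, hu]
      rw [AddValuation.map_neg, V8_pow V hu' (q ^ 2), hu', WithTop.coe_lt_coe]
      have : (3 : ℤ) ≤ (q ^ 2 : ℕ) := by exact_mod_cast hQ3
      lia
    rw [e1, V8_add_lt, e2]
    rw [e2]
    refine lt_of_le_of_ne ?_ (Ne.symm h1)
    by_cases hz : (s0 : K) ^ (q ^ 2) - s0 = 0
    · rw [hz]; simp
    · obtain ⟨k, hk⟩ := V8_lift V hz
      rw [hk] at hπ0 ⊢
      have : 0 < k := by exact_mod_cast hπ0
      have : 1 ≤ k := this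
      exact_mod_cast this
  · intro w hw hlt
    apply hcs w hw
    have := AddValuation.map_lt_add V hlt (y := -u) (by rw [AddValuation.map_neg]; exact hu0)
    rwa [show (s0 : K) + u + w - w ^ p + -u = s0 + w - w ^ p by ring] at this

theorem choose8 [Algebra (RatFunc (ZMod p)) K] [FiniteDimensional (RatFunc (ZMod p)) K]
    (hx : ∃ x, V x = 1) : ∃ (Q c : ℕ) (s : K), p ∣ Q ∧ 3 ≤ Q ∧ 0 ≤ V s ∧ V (s ^ Q - s) = 1 ∧
      (∀ u, 0 ≤ V u → ¬ 0 < V (s + u - u ^ p)) ∧ Function.Injective (aeval (R := ZMod p) s) ∧ 0 < c ∧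
      ∀ h, V h = 0 → 0 < V (1 - h ^ c) := by
  have hfin : Finite (O8 p V ⧸ M8 p V) := kapfin8 V hx
  have hmax : (M8 p V).IsMaximal := M8_max V
  let : Field (O8 p V ⧸ M8 p V) := Ideal.Quotient.field _
  exact choose8_aux V (Ideal.Quotient.mk (M8 p V)) Ideal.Quotient.mk_surjective
    (fun x => Ideal.Quotient.eq_zero_iff_mem) hx
end

end PartF4

section PartF5
open Polynomial
section
variable {K : Type} [Field K] (V : AddValuation K (WithTop ℤ))

lemma intO8 {n : ℕ} {x : K} (f : Fin n → K) (hf : ∀ i, 0 ≤ V (f i)) (h : x ^ n + ∑ i, f i * x ^ (i : ℕ) = 0) :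
    0 ≤ V x := by
  by_contra hcon
  push Not at hcon
  have hx0 : x ≠ 0 := by rintro rfl; simp at hcon
  obtain ⟨m, hm⟩ := V8_lift V hx0
  rw [hm] at hcon
  have hm0 : m < 0 := by exact_mod_cast hcon
  have h1 : V (x ^ n) < V (∑ i, f i * x ^ (i : ℕ)) := by
    apply AddValuation.map_lt_sum
    · rw [V8_pow V hm]; exact WithTop.coe_ne_top
    · intro i _
      rw [AddValuation.map_mul, V8_pow V hm, V8_pow V hm]
      refine lt_of_lt_of_le ?_ (le_add_of_nonneg_left (hf i))
      rw [WithTop.coe_lt_coe]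
      have : (i : ℤ) < n := by exact_mod_cast i.2
      nlinarith
  have h2 := V8_add_lt V h1
  rw [h, AddValuation.map_zero, V8_pow V hm] at h2
  exact WithTop.coe_ne_top h2.symm

variable {A : Type} [CommRing A] [Algebra A K]

lemma lead8 {x : K} (m : ℕ) (f : ℕ → integralClosure A K) (h : ∑ i ∈ Finset.range (m+1), (f i : K) * x ^ i = 0) :
    IsIntegral A ((f m : K) * x) := by
  by_cases hm : f m = 0
  · rw [hm]; simp [isIntegral_zero]
  let P : (integralClosure A K)[X] := ∑ i ∈ Finset.range (m+1), C (f i) * X ^ i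
  have hc : ∀ j, P.coeff j = if j < m + 1 then f j else 0 := by
    intro j
    simp only [P, finsetSum_coeff, coeff_C_mul, coeff_X_pow, mul_ite, mul_one, mul_zero,
      Finset.sum_ite_eq, Finset.mem_range]
  have hd : P.natDegree = m := by
    apply natDegree_eq_of_le_of_coeff_ne_zero
    · rw [natDegree_le_iff_coeff_eq_zero]
      intro j hj
      rw [hc, if_neg (by lia)]
    · rw [hc, if_pos (by lia)]; exact hm
  have hl : P.leadingCoeff = f m := by
    rw [leadingCoeff, hd, hc, if_pos (by lia)]
  have h1 := RingHom.isIntegralElem_leadingCoeff_mul (algebraMap (integralClosure A K) K) P x (by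
    simp only [P, eval₂_finsetSum, eval₂_mul, eval₂_C, eval₂_pow, eval₂_X]
    exact h)
  rw [hl] at h1
  exact isIntegral_trans (R := A) (A := integralClosure A K) _ h1

theorem horner8 (hO : ∀ x : K, IsIntegral A x → 0 ≤ V x) {x : K} (hx : 0 ≤ V x) (m : ℕ) :
    ∀ f : ℕ → integralClosure A K, ∑ i ∈ Finset.range (m+1), (f i : K) * x ^ i = 0 →
    (∃ i < m + 1, ¬ 0 < V (f i : K)) → ∃ h : K, IsIntegral A h ∧ IsIntegral A (h * x) ∧ V h = 0 := by
  induction m with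
  | zero =>
    intro f h ⟨i, hi, hi0⟩
    exfalso
    obtain rfl : i = 0 := by lia
    simp at h
    simp [h] at hi0
  | succ m ih =>
    intro f h ⟨i, hi, hi0⟩
    have hl := lead8 (m+1) f h
    by_cases hm : 0 < V (f (m+1) : K)
    · let g : integralClosure A K := ⟨(f (m+1) : K) * x, hl⟩
      have hg : 0 < V (g : K) := by
        change 0 < V ((f (m+1) : K) * x)
        rw [AddValuation.map_mul]
        exact lt_of_lt_of_le hm (le_add_of_nonneg_right hx)
      apply ih (fun j => if j = m then f m + g else f j)
      · rw [Finset.sum_range_succ] at h ⊢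
        rw [Finset.sum_range_succ] at h
        rw [← h]
        rw [Finset.sum_congr rfl (g := fun j => (f j : K) * x ^ j)
          (fun j hj => by rw [if_neg (Finset.mem_range.1 hj).ne])]
        simp only [if_true]
        push_cast
        change _ + ((f m : K) + (f (m+1) : K) * x) * x ^ m = _
        ring
      · have him : i ≠ m + 1 := by rintro rfl; exact hi0 hm
        refine ⟨i, by lia, ?_⟩
        by_cases him' : i = m
        · subst him'
          simp only [if_true]
          push_cast
          intro hcon
          apply hi0
          have := AddValuation.map_lt_add V hcon (y := - (g : K)) (by rw [AddValuation.map_neg]; exact hg)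
          rwa [add_neg_cancel_right] at this
        · simp only [if_neg him']
          exact hi0
    · exact ⟨f (m+1), (f (m+1)).2, hl, le_antisymm (not_lt.1 hm) (hO _ (f (m+1)).2)⟩

lemma kill8 {R : Type} [CommRing R] [Finite R] (q : Ideal R) [hq : q.IsPrime] :
    ∃ e, e ∉ q ∧ ∃ N : ℕ, ∀ b ∈ q, e * b ^ N = 0 := by
  classical
  let := Fintype.ofFinite R
  have h1 : ∀ b : R, ∃ e : R, ∃ i : ℕ, b ∈ q → e ∉ q ∧ e * b ^ i = 0 := by
    intro b
    obtain ⟨i, j, hij, h⟩ := Finite.exists_ne_map_eq_of_infinite (fun i : ℕ => b ^ i)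
    wlog hlt : i < j generalizing i j
    · exact this j i hij.symm h.symm (by lia)
    refine ⟨1 - b ^ (j - i), i, fun hb => ⟨fun hcon => ?_, ?_⟩⟩
    · have h2 : b ^ (j - i) ∈ q := q.pow_mem_of_mem hb _ (by lia)
      have := q.add_mem hcon h2
      rw [sub_add_cancel] at this
      exact hq.ne_top ((Ideal.eq_top_iff_one q).2 this)
    · rw [sub_mul, ← pow_add, show j - i + i = j by lia, one_mul, h, sub_self]
  choose e i hei using h1
  refine ⟨∏ b with b ∈ q, e b, ?_, ∑ b, i b, ?_⟩
  · rw [hq.prod_mem_iff]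
    rintro ⟨b, hb, hb2⟩
    exact (hei b (Finset.mem_filter.1 hb).2).1 hb2
  · intro b hb
    have hd1 : e b ∣ ∏ b with b ∈ q, e b := Finset.dvd_prod_of_mem _ (by simp [hb])
    have hd2 : b ^ i b ∣ b ^ ∑ b, i b := pow_dvd_pow _ (Finset.single_le_sum (fun _ _ => Nat.zero_le _) (Finset.mem_univ b))
    have := mul_dvd_mul hd1 hd2
    rw [(hei b hb).2] at this
    exact zero_dvd_iff.1 this
end

end PartF5

section PartF6
open Polynomial
section
variable {p : ℕ} [Fact p.Prime] {K : Type} [Field K] [Algebra (ZMod p) K] (V : AddValuation K (WithTop ℤ))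

def RY8 {K : Type} [Field K] (n : ℕ) (Y : K → Prop) (a : K) : Prop :=
  ∃ f : Fin n → K, (∀ i, Y (f i)) ∧ a ^ n + ∑ i, f i * a ^ (i : ℕ) = 0

lemma deg8 {s : K} {n : ℕ} (hn : Rk8 p s n) [Algebra (ZMod p)[X] K] [FaithfulSMul (ZMod p)[X] K]
    (hmap : ∀ a : (ZMod p)[X], algebraMap (ZMod p)[X] K a = aeval s a) {x : K}
    (hx : IsIntegral (ZMod p)[X] x) : RY8 n (fun y => ∃ a : (ZMod p)[X], y = aeval s a) x := by
  obtain ⟨a, ha, h⟩ := hn (fun i => x ^ (i : ℕ))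
  let F : (ZMod p)[X][X] := ∑ i, C (a i) * X ^ (i : ℕ)
  have hF : aeval x F = 0 := by
    rw [← h]
    simp only [F, map_sum, map_mul, aeval_C, map_pow, aeval_X, hmap]
  have hFc : ∀ i : Fin (n+1), F.coeff i = a i := by
    intro i
    simp only [F, finsetSum_coeff, coeff_C_mul, coeff_X_pow, mul_ite, mul_one, mul_zero]
    rw [Finset.sum_eq_single i]
    · simp
    · intro j _ hj
      rw [if_neg]
      exact fun h => hj (Fin.ext h.symm)
    · simp
  have hF0 : F ≠ 0 := by
    intro h0
    apply ha
    funext i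
    rw [← hFc, h0]; simp
  have hFd : F.natDegree ≤ n := by
    apply natDegree_sum_le_of_forall_le
    intro i _
    exact (natDegree_C_mul_X_pow_le _ _).trans (by have := i.2; lia)
  have hdvd := minpoly.isIntegrallyClosed_dvd hx hF
  have hd : (minpoly (ZMod p)[X] x).natDegree ≤ n := (natDegree_le_of_dvd hdvd hF0).trans hFd
  let G : (ZMod p)[X][X] := minpoly (ZMod p)[X] x * X ^ (n - (minpoly (ZMod p)[X] x).natDegree)
  have hGm : G.Monic := (minpoly.monic hx).mul (monic_X_pow _)
  have hGd : G.natDegree = n := by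
    rw [(minpoly.monic hx).natDegree_mul (monic_X_pow _), natDegree_X_pow]; lia
  have hG0 : aeval x G = 0 := by simp [G]
  refine ⟨fun i => aeval s (G.coeff i), fun i => ⟨_, rfl⟩, ?_⟩
  rw [hGm.as_sum, hGd] at hG0
  simp only [map_add, map_pow, map_sum, map_mul, aeval_C, aeval_X, hmap] at hG0
  rw [Finset.sum_range] at hG0
  exact hG0

theorem main8 {s : K} (hs : 0 ≤ V s) (hinj : Function.Injective (aeval (R := ZMod p) s)) {n : ℕ} (hn : Rk8 p s n)
    (hx : ∃ x, V x = 1) {c : ℕ} (hc0 : 0 < c) (hc : ∀ h, V h = 0 → 0 < V (1 - h ^ c))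
    (Y : K → Prop) (hY : ∀ a : (ZMod p)[X], Y (aeval s a)) (hYO : ∀ y, Y y → 0 ≤ V y) :
    ∃ (w : K) (N : ℕ), ∀ x, 0 ≤ V x ↔ ∃ a h, RY8 n Y a ∧ RY8 n Y h ∧ h * x = a ∧ RY8 n Y (w * (1 - h ^ c) ^ N) := by
  let : Algebra (ZMod p)[X] K := (aeval (R := ZMod p) s).toAlgebra
  have hmap : ∀ a : (ZMod p)[X], algebraMap (ZMod p)[X] K a = aeval s a := fun a => rfl
  have : IsScalarTower (ZMod p) (ZMod p)[X] K :=
    IsScalarTower.of_algebraMap_eq' (Subsingleton.elim _ _)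
  have : FaithfulSMul (ZMod p)[X] K := (faithfulSMul_iff_algebraMap_injective _ _).2 hinj
  have hI : ∀ x : K, IsIntegral (ZMod p)[X] x → RY8 n Y x := by
    intro x hx
    obtain ⟨f, hf, h⟩ := deg8 hn hmap hx
    refine ⟨f, fun i => ?_, h⟩
    obtain ⟨a, ha⟩ := hf i
    rw [ha]; exact hY a
  have hRO : ∀ x : K, RY8 n Y x → 0 ≤ V x := by
    rintro x ⟨f, hf, h⟩
    exact intO8 V f (fun i => hYO _ (hf i)) h
  have hintv : ∀ x : K, IsIntegral (ZMod p)[X] x → 0 ≤ V x := fun x hx => hRO x (hI x hx)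
  obtain ⟨P, hP, hPV⟩ := genP8 V hs hinj hn hx
  have hPs0 : aeval s P ≠ 0 := fun h => hP.ne_zero (hinj (by rw [h, map_zero]))
  have hPs : 0 < V (aeval s P) := (hPV P).2 dvd_rfl
  -- the integral closure as an algebra over the prime field
  let R0 : Subalgebra (ZMod p) K := (integralClosure (ZMod p)[X] K).restrictScalars (ZMod p)
  have hR0 : ∀ x, x ∈ R0 ↔ IsIntegral (ZMod p)[X] x := fun x => Iff.rfl
  have hsR : ∀ a : (ZMod p)[X], aeval s a ∈ R0 := fun a => by
    rw [hR0, ← hmap]; exact isIntegral_algebraMap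
  have hsR1 : s ∈ R0 := by simpa using hsR X
  let T : R0 := aeval (⟨s, hsR1⟩ : R0) P
  have hT : (T : K) = aeval s P := Polynomial.aeval_subalgebra_coe _ _ _
  let I : Ideal R0 := Ideal.span {T}
  have hfin : Finite (R0 ⧸ I) := by
    refine lemF8 hinj hn hP R0 hsR1 (Ideal.Quotient.mk I) Ideal.Quotient.mk_surjective ?_
    rw [Ideal.Quotient.eq_zero_iff_mem]
    exact Ideal.mem_span_singleton_self _
  let q : Ideal R0 := {
    carrier := {x | 0 < V (x : K)}
    zero_mem' := by simp
    add_mem' := fun ha hb => AddValuation.map_lt_add V ha hb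
    smul_mem' := by
      intro c x hx
      simp only [Set.mem_ofPred_eq, smul_eq_mul, MulMemClass.coe_mul, AddValuation.map_mul] at *
      exact lt_of_lt_of_le hx (le_add_of_nonneg_left (hintv _ c.2)) }
  have hqm : ∀ x : R0, x ∈ q ↔ 0 < V (x : K) := fun x => Iff.rfl
  have hqp : q.IsPrime := by
    refine ⟨fun h => ?_, ?_⟩
    · have := (Ideal.eq_top_iff_one q).1 h
      rw [hqm] at this
      simp at this
    · intro x y hxy
      by_contra hcon
      push Not at hcon
      rw [hqm, hqm] at hcon
      rw [hqm] at hxy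
      have h1 := le_antisymm (not_lt.1 hcon.1) (hintv _ x.2)
      have h2 := le_antisymm (not_lt.1 hcon.2) (hintv _ y.2)
      rw [MulMemClass.coe_mul, AddValuation.map_mul, h1, h2] at hxy
      simp at hxy
  have hIq : I ≤ q := by
    rw [Ideal.span_singleton_le_iff_mem, hqm, hT]; exact hPs
  have hqp' : (q.map (Ideal.Quotient.mk I)).IsPrime :=
    Ideal.map_isPrime_of_surjective Ideal.Quotient.mk_surjective (by rwa [Ideal.mk_ker])
  obtain ⟨e', he', N, hN⟩ := kill8 (q.map (Ideal.Quotient.mk I))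
  obtain ⟨e, rfl⟩ := Ideal.Quotient.mk_surjective e'
  have heV : V (e : K) = 0 := by
    refine le_antisymm (not_lt.1 fun h => he' (Ideal.mem_map_of_mem _ ((hqm e).2 h))) (hintv _ e.2)
  have hkill : ∀ b : K, IsIntegral (ZMod p)[X] b → 0 < V b → IsIntegral (ZMod p)[X] ((e : K) / aeval s P * b ^ N) := by
    intro b hb hbV
    have h1 := hN (Ideal.Quotient.mk I ⟨b, hb⟩) (Ideal.mem_map_of_mem _ ((hqm _).2 hbV))
    rw [← map_pow, ← map_mul, Ideal.Quotient.eq_zero_iff_mem] at h1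
    obtain ⟨d, hd⟩ := Ideal.mem_span_singleton'.1 h1
    have h2 := congrArg (Subtype.val) hd
    simp only [MulMemClass.coe_mul, SubmonoidClass.coe_pow, hT] at h2
    have h3 : (e : K) / aeval s P * b ^ N = d := by
      field_simp
      rw [← h2, mul_comm]
    rw [h3]
    exact d.2
  refine ⟨(e : K) / aeval s P, N, fun x => ⟨fun hx => ?_, ?_⟩⟩
  · obtain ⟨a, ⟨i, hi⟩, ha⟩ := prim8 hinj hn hP (fun i => x ^ (i : ℕ))
    obtain ⟨h, h1, h2, h3⟩ := horner8 (A := (ZMod p)[X]) V hintv hx n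
      (fun i => if hi : i < n + 1 then ⟨aeval s (a ⟨i, hi⟩), hsR _⟩ else 0)
      (by
        rw [← ha, Finset.sum_range]
        refine Finset.sum_congr rfl fun i _ => ?_
        rw [dif_pos i.2])
      ⟨i, i.2, by
        rw [dif_pos i.2]
        change ¬ 0 < V (aeval s (a i))
        rwa [hPV]⟩
    refine ⟨h * x, h, hI _ h2, hI _ h1, rfl, hI _ (hkill _ ?_ (hc h h3))⟩
    exact isIntegral_one.sub (h1.pow _)
  · rintro ⟨a, h, ha, hh, hxa, hw⟩
    have ha' := hRO _ ha
    have hh' := hRO _ hh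
    have hw' := hRO _ hw
    have hV1 : 0 < V (1 - h ^ c) := by
      by_contra hcon
      have hge : 0 ≤ V (1 - h ^ c) :=
        AddValuation.map_le_sub V (by simp) (by rw [AddValuation.map_pow]; exact nsmul_nonneg hh' _)
      have h0 : V (1 - h ^ c) = ((0 : ℤ) : WithTop ℤ) := le_antisymm (not_lt.1 hcon) hge
      obtain ⟨k, hk⟩ := V8_lift V hPs0
      have heV' : V (e : K) = ((0 : ℤ) : WithTop ℤ) := heV
      rw [div_eq_mul_inv, AddValuation.map_mul, AddValuation.map_mul, V8_pow V h0, V8_inv V hk, heV',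
        ← WithTop.coe_add, ← WithTop.coe_add] at hw'
      rw [hk] at hPs
      have h5 : 0 < k := by exact_mod_cast hPs
      have h6 : (0 : ℤ) ≤ 0 + -k + N * 0 := by exact_mod_cast hw'
      lia
    have hh0 : V h = ((0 : ℤ) : WithTop ℤ) := by
      refine le_antisymm (not_lt.1 fun hpos => ?_) hh'
      have h7 : 0 < V (h ^ c) := by
        rw [AddValuation.map_pow]
        exact lt_of_lt_of_le hpos (by simpa using nsmul_le_nsmul_left hh' hc0)
      have := AddValuation.map_lt_add V hV1 h7
      rw [sub_add_cancel] at this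
      simp at this
    have hhne : h ≠ 0 := by rintro rfl; simp at hh0
    have : x = h⁻¹ * a := by rw [← hxa]; field_simp
    rw [this, AddValuation.map_mul, V8_inv V hh0]
    simpa using ha'
end

end PartF6

section PartG1
open Polynomial
section
variable {K : Type} [Field K]

def Dio8 {K : Type} [Field K] {σ : Type} (S : (σ → K) → Prop) : Prop :=
  ∃ (τ : Type) (_ : Finite τ) (ι : Type) (_ : Finite ι) (P : ι → MvPolynomial (σ ⊕ τ) K),
    ∀ x, S x ↔ ∃ y : τ → K, ∀ i, MvPolynomial.eval (Sum.elim x y) (P i) = 0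

lemma Dio8.congr {σ : Type} {S T : (σ → K) → Prop} (hS : Dio8 S) (h : ∀ x, T x ↔ S x) : Dio8 T := by
  rwa [show T = S from funext fun x => propext (h x)]

lemma Dio8.eq {σ : Type} (P Q : MvPolynomial σ K) :
    Dio8 (fun x : σ → K => MvPolynomial.eval x P = MvPolynomial.eval x Q) := by
  refine ⟨Empty, inferInstance, Unit, inferInstance, fun _ => MvPolynomial.rename Sum.inl (P - Q), fun x => ?_⟩
  have : ∀ y : Empty → K, MvPolynomial.eval (Sum.elim x y) (MvPolynomial.rename Sum.inl (P - Q)) =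
      MvPolynomial.eval x P - MvPolynomial.eval x Q := by
    intro y
    rw [MvPolynomial.eval_rename, Sum.elim_comp_inl, map_sub]
  constructor
  · intro h
    exact ⟨fun e => e.elim, fun _ => by rw [this, h, sub_self]⟩
  · rintro ⟨y, hy⟩
    have := (this y).symm.trans (hy ())
    exact sub_eq_zero.1 this

lemma Dio8.all {σ α : Type} [Finite α] {S : α → (σ → K) → Prop} (h : ∀ a, Dio8 (S a)) :
    Dio8 (fun x => ∀ a, S a x) := by
  choose τ hτ ι hι P hP using h
  refine ⟨Σ a, τ a, inferInstance, Σ a, ι a, inferInstance,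
    fun ai => MvPolynomial.rename (Sum.map id (fun t => ⟨ai.1, t⟩)) (P ai.1 ai.2), fun x => ?_⟩
  have he : ∀ (y : (Σ a, τ a) → K) (ai : Σ a, ι a),
      MvPolynomial.eval (Sum.elim x y) (MvPolynomial.rename (Sum.map id (fun t => ⟨ai.1, t⟩)) (P ai.1 ai.2))
      = MvPolynomial.eval (Sum.elim x (fun t => y ⟨ai.1, t⟩)) (P ai.1 ai.2) := by
    intro y ai
    rw [MvPolynomial.eval_rename, Sum.elim_comp_map]
    rfl
  simp only [he]
  constructor
  · intro h
    choose y hy using fun a => (hP a x).1 (h a)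
    exact ⟨fun at_ => y at_.1 at_.2, fun ai => hy ai.1 ai.2⟩
  · rintro ⟨y, hy⟩ a
    exact (hP a x).2 ⟨fun t => y ⟨a, t⟩, fun i => hy ⟨a, i⟩⟩

lemma Dio8.and {σ : Type} {S T : (σ → K) → Prop} (hS : Dio8 S) (hT : Dio8 T) :
    Dio8 (fun x => S x ∧ T x) := by
  refine (Dio8.all (α := Bool) (S := fun b => if b then S else T) ?_).congr ?_
  · intro b; cases b <;> simpa
  · intro x; simp [and_comm]

lemma Dio8.ex {σ τ' : Type} [Finite τ'] {S : (σ ⊕ τ' → K) → Prop} (hS : Dio8 S) :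
    Dio8 (fun x : σ → K => ∃ z : τ' → K, S (Sum.elim x z)) := by
  obtain ⟨τ, hτ, ι, hι, P, hP⟩ := hS
  refine ⟨τ' ⊕ τ, inferInstance, ι, hι, fun i => MvPolynomial.rename (Equiv.sumAssoc σ τ' τ) (P i), fun x => ?_⟩
  have he : ∀ (z : τ' → K) (y : τ → K) (i : ι),
      MvPolynomial.eval (Sum.elim x (Sum.elim z y)) (MvPolynomial.rename (Equiv.sumAssoc σ τ' τ) (P i))
      = MvPolynomial.eval (Sum.elim (Sum.elim x z) y) (P i) := by
    intro z y i
    rw [MvPolynomial.eval_rename]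
    congr 2
    funext j
    rcases j with (j | j) | j <;> rfl
  constructor
  · rintro ⟨z, hz⟩
    obtain ⟨y, hy⟩ := (hP _).1 hz
    exact ⟨Sum.elim z y, fun i => by rw [he]; exact hy i⟩
  · rintro ⟨y, hy⟩
    refine ⟨y ∘ Sum.inl, (hP _).2 ⟨y ∘ Sum.inr, fun i => ?_⟩⟩
    rw [← he, Sum.elim_comp_inl_inr]
    exact hy i

lemma Dio8.subst {σ σ' : Type} {S : (σ → K) → Prop} (hS : Dio8 S) (g : σ → MvPolynomial σ' K) :
    Dio8 (fun x : σ' → K => S (fun i => MvPolynomial.eval x (g i))) := by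
  obtain ⟨τ, hτ, ι, hι, P, hP⟩ := hS
  refine ⟨τ, hτ, ι, hι, fun i => MvPolynomial.bind₁
    (Sum.elim (fun j => MvPolynomial.rename Sum.inl (g j)) (fun t => MvPolynomial.X (Sum.inr t))) (P i), fun x => ?_⟩
  refine (hP _).trans ?_
  refine exists_congr fun y => forall_congr' fun i => ?_
  have : MvPolynomial.eval (Sum.elim x y) (MvPolynomial.bind₁
    (Sum.elim (fun j => MvPolynomial.rename Sum.inl (g j)) (fun t => MvPolynomial.X (Sum.inr t))) (P i)) =
    MvPolynomial.eval (Sum.elim (fun i => MvPolynomial.eval x (g i)) y) (P i) := by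
    rw [← MvPolynomial.coe_aeval_eq_eval, ← MvPolynomial.coe_aeval_eq_eval]
    simp only [RingHom.coe_coe]
    rw [MvPolynomial.aeval_bind₁]
    congr 2
    funext j
    rcases j with j | j
    · simp [MvPolynomial.aeval_rename, MvPolynomial.aeval_eq_eval]
    · simp
  rw [this]

/-- unary diophantine predicates -/
def Un8 {K : Type} [Field K] (S : K → Prop) : Prop := Dio8 (fun x : Unit → K => S (x ()))

lemma Un8.app {S : K → Prop} (hS : Un8 S) {σ : Type} (g : MvPolynomial σ K) :
    Dio8 (fun x : σ → K => S (MvPolynomial.eval x g)) :=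
  Dio8.subst hS (fun _ => g)

lemma Un8.fin {S : K → Prop} (hS : Un8 S) : ∃ (k m : ℕ) (P : Fin m → MvPolynomial (Fin (k+1)) K),
    ∀ x, S x ↔ ∃ y : Fin k → K, ∀ i, MvPolynomial.eval (Fin.cons x y : Fin (k+1) → K) (P i) = 0 := by
  obtain ⟨τ, hτ, ι, hι, P, hP⟩ := hS
  obtain ⟨k, ⟨e⟩⟩ := Finite.exists_equiv_fin τ
  obtain ⟨m, ⟨d⟩⟩ := Finite.exists_equiv_fin ι
  refine ⟨k, m, fun i => MvPolynomial.rename (Sum.elim (fun _ => 0) (fun t => (e t).succ)) (P (d.symm i)), fun x => ?_⟩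
  have he : ∀ (y : Fin k → K) (i : ι), MvPolynomial.eval (Fin.cons x y : Fin (k+1) → K)
      (MvPolynomial.rename (Sum.elim (fun _ => 0) (fun t => (e t).succ)) (P i)) =
      MvPolynomial.eval (Sum.elim (fun _ => x) (y ∘ e)) (P i) := by
    intro y i
    rw [MvPolynomial.eval_rename]
    congr 2
    funext j
    rcases j with j | j <;> simp
  simp only [he]
  refine (hP (fun _ => x)).trans ?_
  constructor
  · rintro ⟨y, hy⟩
    refine ⟨y ∘ e.symm, fun i => ?_⟩
    rw [Function.comp_assoc, Equiv.symm_comp_self]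
    exact hy _
  · rintro ⟨y, hy⟩
    refine ⟨y ∘ e, fun i => ?_⟩
    have := hy (d i)
    rwa [Equiv.symm_apply_apply] at this

lemma Un8.RY {Y : K → Prop} (hY : Un8 Y) (n : ℕ) : Un8 (RY8 n Y) := by
  have h1 : Dio8 (fun x : Unit ⊕ Fin n → K => ∀ i : Fin n, Y (x (Sum.inr i))) :=
    Dio8.all fun i => (hY.app (MvPolynomial.X (Sum.inr i))).congr (by simp)
  have h2 : Dio8 (fun x : Unit ⊕ Fin n → K =>
      x (Sum.inl ()) ^ n + ∑ i : Fin n, x (Sum.inr i) * x (Sum.inl ()) ^ (i : ℕ) = 0) :=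
    (Dio8.eq (MvPolynomial.X (Sum.inl ()) ^ n + ∑ i : Fin n, MvPolynomial.X (Sum.inr i) *
      MvPolynomial.X (Sum.inl ()) ^ (i : ℕ)) 0).congr (by simp)
  exact (h1.and h2).ex

lemma Un8.W (p : ℕ) [hp : Fact p.Prime] (π c : K) : Un8 (W8 p π c) := by
  have hp0 : 0 < p := hp.out.pos
  let o : ℕ → Fin p := fun i => ⟨i % p, Nat.mod_lt _ hp0⟩
  have ho : ∀ i (h : i < p), o i = ⟨i, h⟩ := fun i h => Fin.ext (Nat.mod_eq_of_lt h)
  let z0 : Fin p := ⟨0, hp0⟩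
  have h1 : Dio8 (fun x : Unit ⊕ (Fin 4 × Fin p) → K =>
      (∑ i ∈ Finset.range p, π ^ i * x (Sum.inr (0, o i)) ^ p) * x (Sum.inr (3, z0)) = 1) :=
    (Dio8.eq ((∑ i ∈ Finset.range p, MvPolynomial.C (π ^ i) * MvPolynomial.X (Sum.inr (0, o i)) ^ p) *
      MvPolynomial.X (Sum.inr (3, z0))) 1).congr (by simp)
  have h2 : Dio8 (fun x : Unit ⊕ (Fin 4 × Fin p) → K =>
      ∑ i ∈ Finset.range p, (i : K) * (π ^ i * x (Sum.inr (0, o i)) ^ p) =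
        x (Sum.inl ()) * (∑ i ∈ Finset.range p, π ^ i * x (Sum.inr (0, o i)) ^ p) *
        (c + x (Sum.inr (1, z0)) - x (Sum.inr (1, z0)) ^ p +
          ∑ i ∈ Finset.Ico 1 p, π ^ i * x (Sum.inr (2, o i)) ^ p)) :=
    (Dio8.eq (∑ i ∈ Finset.range p, MvPolynomial.C (i : K) * (MvPolynomial.C (π ^ i) * MvPolynomial.X (Sum.inr (0, o i)) ^ p))
      (MvPolynomial.X (Sum.inl ()) *
        (∑ i ∈ Finset.range p, MvPolynomial.C (π ^ i) * MvPolynomial.X (Sum.inr (0, o i)) ^ p) *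
        (MvPolynomial.C c + MvPolynomial.X (Sum.inr (1, z0)) - MvPolynomial.X (Sum.inr (1, z0)) ^ p +
          ∑ i ∈ Finset.Ico 1 p, MvPolynomial.C (π ^ i) * MvPolynomial.X (Sum.inr (2, o i)) ^ p))).congr (by
        intro x
        simp only [map_sum, map_mul, map_add, map_sub, map_pow, MvPolynomial.eval_C, MvPolynomial.eval_X])
  refine (h1.and h2).ex.congr fun x => ⟨?_, ?_⟩
  · rintro ⟨t, u, w, h0, h⟩
    refine ⟨fun jk => if jk.1 = 0 then t jk.2 else if jk.1 = 1 then u else if jk.1 = 2 then w jk.2 else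
      (∑ i ∈ Finset.range p, π ^ i * t i ^ p)⁻¹, ?_⟩
    have e1 : ∀ i ∈ Finset.range p, t (o i) = t i := fun i hi => by rw [ho i (Finset.mem_range.1 hi)]
    have e2 : ∀ i ∈ Finset.Ico 1 p, w (o i) = w i := fun i hi => by rw [ho i (Finset.mem_Ico.1 hi).2]
    have s1 : ∑ i ∈ Finset.range p, π ^ i * t (o i) ^ p = ∑ i ∈ Finset.range p, π ^ i * t i ^ p :=
      Finset.sum_congr rfl fun i hi => by rw [e1 i hi]
    have s2 : ∑ i ∈ Finset.range p, (i : K) * (π ^ i * t (o i) ^ p) = ∑ i ∈ Finset.range p, (i : K) * (π ^ i * t i ^ p) :=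
      Finset.sum_congr rfl fun i hi => by rw [e1 i hi]
    have s3 : ∑ i ∈ Finset.Ico 1 p, π ^ i * w (o i) ^ p = ∑ i ∈ Finset.Ico 1 p, π ^ i * w i ^ p :=
      Finset.sum_congr rfl fun i hi => by rw [e2 i hi]
    constructor
    · simp only [Sum.elim_inr, if_true]
      rw [s1]
      exact mul_inv_cancel₀ h0
    · change ∑ i ∈ Finset.range p, (i : K) * (π ^ i * t (o i) ^ p) =
        x () * (∑ i ∈ Finset.range p, π ^ i * t (o i) ^ p) *
        (c + u - u ^ p + ∑ i ∈ Finset.Ico 1 p, π ^ i * w (o i) ^ p)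
      rw [s1, s2, s3]
      exact h
  · rintro ⟨z, h0, h⟩
    exact ⟨fun i => z (0, o i), z (1, z0), fun i => z (2, o i), left_ne_zero_of_mul_eq_one h0, h⟩

def Y8 {K : Type} [Field K] (p : ℕ) (π c : K) (x : K) : Prop :=
  ∃ z : Fin 2 → K, (W8 p π c (z 0) ∧ W8 p π c (z 1)) ∧ π ^ 2 * x ^ 3 = z 0 + z 1

lemma Un8.Y (p : ℕ) [hp : Fact p.Prime] (π c : K) : Un8 (Y8 p π c) := by
  have h0 : Dio8 (fun x : Unit ⊕ Fin 2 → K => W8 p π c (x (Sum.inr 0))) :=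
    ((Un8.W p π c).app (MvPolynomial.X (Sum.inr 0))).congr (by simp)
  have h1 : Dio8 (fun x : Unit ⊕ Fin 2 → K => W8 p π c (x (Sum.inr 1))) :=
    ((Un8.W p π c).app (MvPolynomial.X (Sum.inr 1))).congr (by simp)
  have h2 : Dio8 (fun x : Unit ⊕ Fin 2 → K => π ^ 2 * x (Sum.inl ()) ^ 3 = x (Sum.inr 0) + x (Sum.inr 1)) :=
    (Dio8.eq (MvPolynomial.C (π ^ 2) * MvPolynomial.X (Sum.inl ()) ^ 3)
      (MvPolynomial.X (Sum.inr 0) + MvPolynomial.X (Sum.inr 1))).congr (by simp)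
  exact ((h0.and h1).and h2).ex

lemma Un8.main {R : K → Prop} (hR : Un8 R) (w : K) (c N : ℕ) :
    Un8 (fun x => ∃ a h, R a ∧ R h ∧ h * x = a ∧ R (w * (1 - h ^ c) ^ N)) := by
  have h0 : Dio8 (fun x : Unit ⊕ Fin 2 → K => R (x (Sum.inr 0))) :=
    (hR.app (MvPolynomial.X (Sum.inr 0))).congr (by simp)
  have h1 : Dio8 (fun x : Unit ⊕ Fin 2 → K => R (x (Sum.inr 1))) :=
    (hR.app (MvPolynomial.X (Sum.inr 1))).congr (by simp)
  have h2 : Dio8 (fun x : Unit ⊕ Fin 2 → K => x (Sum.inr 1) * x (Sum.inl ()) = x (Sum.inr 0)) :=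
    (Dio8.eq (MvPolynomial.X (Sum.inr 1) * MvPolynomial.X (Sum.inl ()))
      (MvPolynomial.X (Sum.inr 0))).congr (by simp)
  have h3 : Dio8 (fun x : Unit ⊕ Fin 2 → K => R (w * (1 - x (Sum.inr 1) ^ c) ^ N)) :=
    (hR.app (MvPolynomial.C w * (1 - MvPolynomial.X (Sum.inr 1) ^ c) ^ N)).congr (by simp)
  refine (h0.and (h1.and (h2.and h3))).ex.congr fun x => ⟨?_, ?_⟩
  · rintro ⟨a, h, h1, h2, h3, h4⟩
    exact ⟨![a, h], h1, h2, h3, h4⟩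
  · rintro ⟨z, h1, h2, h3, h4⟩
    exact ⟨z 0, z 1, h1, h2, h3, h4⟩

variable (V : AddValuation K (WithTop ℤ)) {p : ℕ} [hp : Fact p.Prime]

lemma Y8_O {π c x : K} (hπ : V π = 1) (hc : 0 ≤ V c)
    (hcn : ∀ u, 0 ≤ V u → ¬ 0 < V (c + u - u ^ p)) (h : Y8 p π c x) : 0 ≤ V x := by
  obtain ⟨z, ⟨h0, h1⟩, h2⟩ := h
  have h3 := AddValuation.map_le_add V (V8_W V hπ hc hcn h0) (V8_W V hπ hc hcn h1)
  rw [← h2] at h3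
  by_cases hx : x = 0
  · simp [hx]
  obtain ⟨n, hn⟩ := V8_lift V hx
  have hπ' : V π = ((1 : ℤ) : WithTop ℤ) := hπ
  rw [AddValuation.map_mul, V8_pow V hπ', V8_pow V hn, ← WithTop.coe_add] at h3
  have h4 : (0 : ℤ) ≤ (2 : ℕ) * 1 + (3 : ℕ) * n := by exact_mod_cast h3
  rw [hn]
  have : 0 ≤ n := by lia
  exact_mod_cast this

lemma Y8_poly [CharP K p] [Algebra (ZMod p) K] {s : K} (Q : ℕ) (hQ : p ∣ Q) (hQ3 : 3 ≤ Q)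
    (hinj : Function.Injective (aeval (R := ZMod p) s)) (a : (ZMod p)[X]) :
    Y8 p (s ^ Q - s) s (aeval s a) := by
  have h1 := W8_poly Q hQ hQ3 hinj ((X ^ Q - X) * a ^ 3 - 1) ⟨-1, a ^ 3, by ring⟩
  have h2 := W8_poly Q hQ hQ3 hinj 1 isCoprime_one_left
  refine ⟨![_, _], ⟨h1, h2⟩, ?_⟩
  simp
  ring

theorem final8 (p : ℕ) [hp : Fact p.Prime] (K : Type) [Field K] [Algebra (RatFunc (ZMod p)) K]
    [FiniteDimensional (RatFunc (ZMod p)) K] (V : AddValuation K (WithTop ℤ)) (hx : ∃ x, V x = 1) :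
    Un8 (fun x => 0 ≤ V x) := by
  let : Algebra (ZMod p) K := ((algebraMap (RatFunc (ZMod p)) K).comp (algebraMap (ZMod p) (RatFunc (ZMod p)))).toAlgebra
  have hcK : CharP K p := charP_of_injective_algebraMap (algebraMap (ZMod p) K).injective p
  obtain ⟨Q, c, s, hQ, hQ3, hs, hπ, hcn, hinj, hc0, hc⟩ := choose8 (p := p) V hx
  obtain ⟨n, -, hn⟩ := lemG8 p K s hinj
  obtain ⟨w, N, h⟩ := main8 V hs hinj hn hx hc0 hc (Y8 p (s ^ Q - s) s) (Y8_poly Q hQ hQ3 hinj)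
    (fun y hy => Y8_O V hπ hs hcn hy)
  exact Dio8.congr (Un8.main (Un8.RY (Un8.Y p (s ^ Q - s) s) n) w c N) (fun x => h (x ()))
end

end PartG1

/-- The valuation ring of any prime of a global function field `K`
containing a primitive `q`-th root of unity (`q ≠ char K` prime) is existentially
(diophantine) definable over `K`. -/
theorem statement8 (p q : ℕ) [Fact p.Prime] (hq : q.Prime) (hqp : q ≠ p)
    (K : Type) [Field K] [Algebra (RatFunc (ZMod p)) K]
    [FiniteDimensional (RatFunc (ZMod p)) K]
    (ζ : K) (hζ : IsPrimitiveRoot ζ q)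
    (v : FFPrime K) :
    ExistDefinable {x : K | 0 ≤ v.ord x} := by
  obtain ⟨x, hx⟩ := v.ord_surj 1
  exact (final8 p K (AddValuation.of v.ord v.ord_zero v.ord_one v.ord_add v.ord_mul) ⟨x, hx⟩).fin
end
end
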